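/- arXiv:1402.7184 — 6 statements merged into one kernel-verified Lean document; each statement's English description precedes it below -/
import Mathlib

section
/- There exists a regular function x₀ : [0,1] → ℝ such that, defining the sequence x_{t+1} = T x_t for all t ∈ ℕ (where T is the continuous-agent Hegselmann–Krause update), one has x_t(1) − x_t(0) > 2 for every t ∈ ℕ. -/
open MeasureTheory Set

/-- The neighbourhood set `N_x(α) = {β ∈ [0,1] : |x(β) − x(α)| ≤ 1}`. -/
def hkNbhd (x : ℝ → ℝ) (α : ℝ) : Set ℝ :=
  {β | β ∈ Icc (0:ℝ) 1 ∧ |x β - x α| ≤ 1}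

/-- The continuous-agent Hegselmann–Krause update
`Tx(α) = (∫_{N_x(α)} x dμ) / μ(N_x(α))`. -/
noncomputable def hkT (x : ℝ → ℝ) : ℝ → ℝ :=
  fun α => (∫ β in hkNbhd x α, x β) / (volume (hkNbhd x α)).toReal

/-- A function `x : [0,1] → ℝ` is regular if it is continuous, nondecreasing,
differentiable outside a set of measure zero, and there are constants
`0 < m ≤ M` with `m ≤ x′ ≤ M` wherever the derivative exists. -/
def Regular (x : ℝ → ℝ) : Prop :=
  ContinuousOn x (Icc 0 1) ∧ MonotoneOn x (Icc 0 1) ∧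
  ∃ m M : ℝ, 0 < m ∧ m ≤ M ∧
    (∀ᵐ α ∂(volume.restrict (Icc (0:ℝ) 1)), DifferentiableAt ℝ x α) ∧
    ∀ α ∈ Icc (0:ℝ) 1, DifferentiableAt ℝ x α → m ≤ deriv x α ∧ deriv x α ≤ M

/-!
The initial profile is odd about `1/2`. It has two heavy, nearly flat wings at opinions near `±3/2`
and a light central cluster near `0`, joined by steep links. An agent on the right link either sees
no agent of the right wing and falls into the central cluster, or sees the whole wing and is
recruited by it. In between lies a narrow window of opinions for which the edge of vision falls
inside the wing. There the update at least doubles differences of opinion: since the wing is flat,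
raising the opinion a little brings many wing agents into view, and the centre keeps the average
well below them. Hence the mass of the links halves at every step. The wing is pulled inwards only
by the links, so its total retreat is bounded by a geometric series and it stays above `7/5`.
-/

namespace HegselmannKrause

section SetAverage

variable {X : Type*} [MeasurableSpace X] {μ : Measure X} {f : X → ℝ} {s t : Set X} {k b : ℝ}

lemma setAverage_mem_of_forall_mem {E : Type*} [NormedAddCommGroup E] [NormedSpace ℝ E]
    [CompleteSpace E] {g : X → E} {K : Set E} (hK : Convex ℝ K) (hKc : IsClosed K)
    (hs : NullMeasurableSet s μ) (hs₀ : 0 < μ.real s) (hg : IntegrableOn g s μ)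
    (h : ∀ x ∈ s, g x ∈ K) : ⨍ x in s, g x ∂μ ∈ K := by
  obtain ⟨hpos, hlt⟩ := ENNReal.toReal_pos_iff.1 hs₀
  refine hK.set_average_mem hKc hpos.ne' hlt.ne ?_ hg
  filter_upwards [ae_restrict_mem₀ hs] with x hx using h x hx

lemma add_mul_div_le_setAverage (hs : NullMeasurableSet s μ) (ht : NullMeasurableSet t μ)
    (hts : t ⊆ s) (hs₀ : 0 < μ.real s) (hf : IntegrableOn f s μ)
    (hk : k ≤ ⨍ x in t, f x ∂μ) (hb : ∀ x ∈ s \ t, b ≤ f x) :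
    k + (b - k) * (μ.real (s \ t) / μ.real s) ≤ ⨍ x in s, f x ∂μ := by
  have hs_top : μ s ≠ ⊤ := (ENNReal.toReal_pos_iff.1 hs₀).2.ne
  have hfint := integral_inter_add_sdiff₀ ht hf
  have hmeas := measureReal_inter_add_sdiff₀ (s := s) ht hs_top
  rw [inter_eq_self_of_subset_right hts] at hfint hmeas
  have hin : k * μ.real t ≤ ∫ x in t, f x ∂μ := by
    rw [← measure_smul_setAverage f (measure_ne_top_of_subset hts hs_top), smul_eq_mul, mul_comm]
    gcongr
  have hout : b * μ.real (s \ t) ≤ ∫ x in s \ t, f x ∂μ := by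
    have hsd_top : μ (s \ t) ≠ ⊤ := measure_ne_top_of_subset sdiff_subset hs_top
    simpa [mul_comm] using setIntegral_mono_on₀ (integrableOn_const hsd_top)
      (hf.mono_set sdiff_subset) (hs.diff ht) hb
  rw [setAverage_eq, smul_eq_mul, inv_mul_eq_div, le_div_iff₀ hs₀, ← hfint, add_mul, mul_assoc,
    div_mul_cancel₀ _ hs₀.ne', ← hmeas]
  linarith

lemma setAverage_le_add_mul_div (hs : NullMeasurableSet s μ) (ht : NullMeasurableSet t μ)
    (hts : t ⊆ s) (hs₀ : 0 < μ.real s) (hf : IntegrableOn f s μ)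
    (hk : ⨍ x in t, f x ∂μ ≤ k) (hb : ∀ x ∈ s \ t, f x ≤ b) :
    ⨍ x in s, f x ∂μ ≤ k + (b - k) * (μ.real (s \ t) / μ.real s) := by
  have hneg := add_mul_div_le_setAverage (k := -k) (b := -b) hs ht hts hs₀ hf.neg
    (by simpa only [Pi.neg_apply, average_neg, neg_le_neg_iff] using hk)
    (fun x hx => neg_le_neg (hb x hx))
  simp only [Pi.neg_apply, average_neg] at hneg
  linarith

end SetAverage

section RealLine

variable {f : ℝ → ℝ} {s : Set ℝ}

lemma volumeReal_le_of_forall_sub_le {d : ℝ} (hd : 0 ≤ d)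
    (h : ∀ a ∈ s, ∀ b ∈ s, a ≤ b → b - a ≤ d) : volume.real s ≤ d := by
  refine ENNReal.toReal_le_of_le_ofReal hd
    ((Real.volume_le_diam s).trans (Metric.ediam_le_of_forall_dist_le fun a ha b hb => ?_))
  rw [Real.dist_eq, abs_le]
  rcases le_total a b with hab | hba
  · constructor <;> linarith [h a ha b hb hab]
  · constructor <;> linarith [h b hb a ha hba]

lemma lipschitzOnWith_of_monotoneOn {K : NNReal} (hf : MonotoneOn f s)
    (h : ∀ a ∈ s, ∀ b ∈ s, a ≤ b → f b - f a ≤ K * (b - a)) : LipschitzOnWith K f s := by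
  refine LipschitzOnWith.of_le_add_mul K fun a ha b hb => ?_
  rw [Real.dist_eq]
  rcases le_total a b with hab | hba
  · have : 0 ≤ K * |a - b| := by positivity
    linarith [hf ha hb hab]
  · rw [abs_of_nonneg (sub_nonneg.2 hba)]
    linarith [h b hb a ha hba]

lemma sub_le_mul_of_lipschitzOnWith {K : NNReal} {a b : ℝ} (hf : LipschitzOnWith K f s)
    (ha : a ∈ s) (hb : b ∈ s) (hab : a ≤ b) : f b - f a ≤ K * (b - a) := by
  have := (le_abs_self _).trans (hf.dist_le_mul b hb a ha)
  rwa [Real.dist_eq, abs_of_nonneg (sub_nonneg.2 hab)] at this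

lemma sub_le_mul_volumeReal_preimage_Ioc {K : NNReal} {a b p q : ℝ} (hab : a ≤ b)
    (hf : LipschitzOnWith K f (Icc a b)) (hp : f a ≤ p) (hq : q ≤ f b) :
    q - p ≤ K * volume.real (Icc a b ∩ f ⁻¹' Ioc p q) := by
  set S := Icc a b ∩ f ⁻¹' Ioc p q
  have hcover : Ioc p q ⊆ f '' S := by
    intro y hy
    obtain ⟨c, hc, rfl⟩ := intermediate_value_Icc hab hf.continuousOn
      ⟨hp.trans hy.1.le, hy.2.trans hq⟩
    exact ⟨c, ⟨hc, hy⟩, rfl⟩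
  -- `f` expands one-dimensional Hausdorff measure, which is Lebesgue measure, at most `K` times.
  have himage := (hf.mono (inter_subset_left : S ⊆ _)).hausdorffMeasure_image_le zero_le_one
  rw [hausdorffMeasure_real, ENNReal.rpow_one] at himage
  have hS : volume S ≠ ⊤ := measure_ne_top_of_subset inter_subset_left (by simp)
  have := ENNReal.toReal_mono (ENNReal.mul_ne_top ENNReal.coe_ne_top hS)
    ((measure_mono hcover).trans himage)
  rw [Real.volume_Ioc, ENNReal.toReal_mul, ENNReal.coe_toReal] at this
  exact (le_max_left _ _).trans this

lemma le_deriv_of_forall_mul_le_sub {m a : ℝ} (h : ∀ a b, a ≤ b → m * (b - a) ≤ f b - f a)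
    (hd : DifferentiableAt ℝ f a) : m ≤ deriv f a := by
  have hmono : Monotone fun y => f y - m * y := fun a b hab => by
    linarith [h a b hab]
  have hderiv : HasDerivAt (fun y => f y - m * y) (deriv f a - m) a :=
    hd.hasDerivAt.fun_sub (hasDerivAt_const_mul m)
  exact sub_nonneg.1 (hderiv.deriv ▸ hmono.deriv_nonneg)

end RealLine

lemma regular_of_forall_slope_mem {x : ℝ → ℝ} {m M : ℝ} (hm : 0 < m)
    (hlow : ∀ α β, α ≤ β → m * (β - α) ≤ x β - x α)
    (hupp : ∀ α β, α ≤ β → x β - x α ≤ M * (β - α)) : Regular x := by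
  have hmono : Monotone x := fun α β h =>
    sub_nonneg.1 ((mul_nonneg hm.le (sub_nonneg.2 h)).trans (hlow α β h))
  have hmM : m ≤ M := by linarith [hlow 0 1 zero_le_one, hupp 0 1 zero_le_one]
  have hlip : LipschitzOnWith ⟨M, hm.le.trans hmM⟩ x univ :=
    lipschitzOnWith_of_monotoneOn (hmono.monotoneOn _) fun α _ β _ => hupp α β
  refine ⟨hlip.continuousOn.mono (subset_univ _), hmono.monotoneOn _, m, M, hm, hmM,
    ae_restrict_of_ae hmono.ae_differentiableAt, fun α _ hd => ⟨?_, ?_⟩⟩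
  · exact le_deriv_of_forall_mul_le_sub hlow hd
  · have := le_deriv_of_forall_mul_le_sub (f := -x) (m := -M)
      (fun α β h => by simp only [Pi.neg_apply]; linarith [hupp α β h]) hd.neg
    rw [deriv.neg] at this
    linarith

section Update

variable {x : ℝ → ℝ} {α β k : ℝ}

lemma hkT_eq_setAverage (x : ℝ → ℝ) (α : ℝ) : hkT x α = ⨍ β in hkNbhd x α, x β := by
  rw [setAverage_eq, smul_eq_mul, inv_mul_eq_div]
  rfl

lemma hkNbhd_subset_Icc (x : ℝ → ℝ) (α : ℝ) : hkNbhd x α ⊆ Icc 0 1 := fun _ h => h.1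

lemma volume_ne_top_of_subset_Icc {s : Set ℝ} (hs : s ⊆ Icc 0 1) : volume s ≠ ⊤ :=
  measure_ne_top_of_subset hs (by simp)

lemma volume_hkNbhd_ne_top (x : ℝ → ℝ) (α : ℝ) : volume (hkNbhd x α) ≠ ⊤ :=
  volume_ne_top_of_subset_Icc (hkNbhd_subset_Icc x α)

lemma integrableOn_hkNbhd (hx : IntegrableOn x (Icc 0 1)) (α : ℝ) :
    IntegrableOn x (hkNbhd x α) :=
  hx.mono_set (hkNbhd_subset_Icc x α)

lemma nullMeasurableSet_Icc_inter_preimage (hx : IntegrableOn x (Icc 0 1)) {J : Set ℝ}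
    (hJ : MeasurableSet J) : NullMeasurableSet (Icc 0 1 ∩ x ⁻¹' J) := by
  rw [inter_comm, ← nullMeasurableSet_restrict measurableSet_Icc.nullMeasurableSet]
  exact hx.aestronglyMeasurable.aemeasurable.nullMeasurable hJ

lemma nullMeasurableSet_hkNbhd (hx : IntegrableOn x (Icc 0 1)) (α : ℝ) :
    NullMeasurableSet (hkNbhd x α) :=
  nullMeasurableSet_Icc_inter_preimage hx (J := Metric.closedBall (x α) 1)
    measurableSet_closedBall

lemma mem_Icc_of_mem_hkNbhd {γ : ℝ} (h : γ ∈ hkNbhd x α) : x γ ∈ Icc (x α - 1) (x α + 1) := by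
  constructor <;> linarith [abs_le.1 h.2]

lemma mem_hkNbhd {γ : ℝ} (hγ : γ ∈ Icc (0 : ℝ) 1) (h : x γ ∈ Icc (x α - 1) (x α + 1)) :
    γ ∈ hkNbhd x α :=
  ⟨hγ, abs_le.2 ⟨by linarith [h.1], by linarith [h.2]⟩⟩

lemma add_one_lt_of_mem_hkNbhd_sdiff (hαβ : x α ≤ x β) {γ : ℝ} (hγ : γ ∈ hkNbhd x β \ hkNbhd x α) :
    x α + 1 < x γ := by
  by_contra! h
  exact hγ.2 (mem_hkNbhd hγ.1.1 ⟨by linarith [(mem_Icc_of_mem_hkNbhd hγ.1).1], h⟩)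

lemma lt_sub_one_of_mem_hkNbhd_sdiff (hαβ : x α ≤ x β) {γ : ℝ} (hγ : γ ∈ hkNbhd x α \ hkNbhd x β) :
    x γ < x β - 1 := by
  by_contra! h
  exact hγ.2 (mem_hkNbhd hγ.1.1 ⟨h, by linarith [(mem_Icc_of_mem_hkNbhd hγ.1).2]⟩)

lemma hkT_mem_Icc (hx : IntegrableOn x (Icc 0 1)) (hα : 0 < volume.real (hkNbhd x α)) :
    hkT x α ∈ Icc (x α - 1) (x α + 1) := by
  rw [hkT_eq_setAverage]
  exact setAverage_mem_of_forall_mem (convex_Icc _ _) isClosed_Icc (nullMeasurableSet_hkNbhd hx α)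
    hα (integrableOn_hkNbhd hx α) fun _ => mem_Icc_of_mem_hkNbhd

lemma hkT_le_of_forall_le (hx : IntegrableOn x (Icc 0 1)) (hα : 0 < volume.real (hkNbhd x α))
    (h : ∀ γ ∈ Icc 0 1, x γ ≤ k) : hkT x α ≤ k := by
  rw [hkT_eq_setAverage]
  exact setAverage_mem_of_forall_mem (convex_Iic _) isClosed_Iic (nullMeasurableSet_hkNbhd hx α)
    hα (integrableOn_hkNbhd hx α) fun γ hγ => h γ hγ.1

lemma mul_volumeReal_sdiff_le_hkT_sub (hx : IntegrableOn x (Icc 0 1))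
    (hα : 0 < volume.real (hkNbhd x α)) (hβ : 0 < volume.real (hkNbhd x β)) (hαβ : x α ≤ x β) :
    (x α + 1 - hkT x α) * volume.real (hkNbhd x β \ hkNbhd x α) ≤ hkT x β - hkT x α := by
  -- Both updates are compared with the average over the union of the two neighbourhoods.
  set A := hkNbhd x α
  set B := hkNbhd x β
  have hA := nullMeasurableSet_hkNbhd hx α
  have hB := nullMeasurableSet_hkNbhd hx β
  have hsub : A ∪ B ⊆ Icc 0 1 := union_subset (hkNbhd_subset_Icc x α) (hkNbhd_subset_Icc x β)
  have hpos : 0 < volume.real (A ∪ B) :=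
    hα.trans_le (measureReal_mono subset_union_left (volume_ne_top_of_subset_Icc hsub))
  have hle_one : volume.real (A ∪ B) ≤ 1 := by
    simpa using measureReal_mono (μ := volume) hsub (by simp)
  have hint := hx.mono_set hsub
  have hlower := add_mul_div_le_setAverage (hA.union hB) hA subset_union_left hpos hint
    (hkT_eq_setAverage x α).le (b := x α + 1) (by
      rw [union_sdiff_left]
      exact fun γ hγ => (add_one_lt_of_mem_hkNbhd_sdiff hαβ hγ).le)
  have hupper := setAverage_le_add_mul_div (hA.union hB) hB subset_union_right hpos hint
    (hkT_eq_setAverage x β).ge (b := x β - 1) (by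
      rw [union_sdiff_right]
      exact fun γ hγ => (lt_sub_one_of_mem_hkNbhd_sdiff hαβ hγ).le)
  rw [union_sdiff_left] at hlower
  have hα_le := (hkT_mem_Icc hx hα).2
  have hβ_ge := (hkT_mem_Icc hx hβ).1
  calc (x α + 1 - hkT x α) * volume.real (B \ A)
      ≤ (x α + 1 - hkT x α) * (volume.real (B \ A) / volume.real (A ∪ B)) := by
        gcongr
        exact le_div_self measureReal_nonneg hpos hle_one
    _ ≤ (⨍ γ in A ∪ B, x γ) - hkT x α := by linarith
    _ ≤ hkT x β - hkT x α := by
        have : (x β - 1 - hkT x β) * (volume.real ((A ∪ B) \ B) / volume.real (A ∪ B)) ≤ 0 :=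
          mul_nonpos_of_nonpos_of_nonneg (by linarith) (by positivity)
        linarith

lemma hkT_le_hkT (hx : IntegrableOn x (Icc 0 1)) (hα : 0 < volume.real (hkNbhd x α))
    (hβ : 0 < volume.real (hkNbhd x β)) (hαβ : x α ≤ x β) : hkT x α ≤ hkT x β := by
  have hα_le := (hkT_mem_Icc hx hα).2
  exact sub_nonneg.1 <| (mul_nonneg (by linarith) measureReal_nonneg).trans
    (mul_volumeReal_sdiff_le_hkT_sub hx hα hβ hαβ)

lemma setAverage_sub_le_hkT (hx : IntegrableOn x (Icc 0 1)) {t : Set ℝ}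
    (ht : NullMeasurableSet t) (htα : t ⊆ hkNbhd x α) (ht₀ : 0 < volume.real t) :
    (⨍ γ in t, x γ) - 2 * (volume.real (hkNbhd x α \ t) / volume.real (hkNbhd x α))
      ≤ hkT x α := by
  have hα : 0 < volume.real (hkNbhd x α) :=
    ht₀.trans_le (measureReal_mono htα (volume_hkNbhd_ne_top x α))
  have hmean : ⨍ γ in t, x γ ≤ x α + 1 :=
    setAverage_mem_of_forall_mem (convex_Iic _) isClosed_Iic ht ht₀
      ((integrableOn_hkNbhd hx α).mono_set htα) fun γ hγ => (mem_Icc_of_mem_hkNbhd (htα hγ)).2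
  have := add_mul_div_le_setAverage (nullMeasurableSet_hkNbhd hx α) ht htα hα
    (integrableOn_hkNbhd hx α) le_rfl (b := (⨍ γ in t, x γ) - 2) fun γ hγ => by
      linarith [(mem_Icc_of_mem_hkNbhd hγ.1).1]
  rw [hkT_eq_setAverage]
  linarith

end Update

section Reflection

variable {x : ℝ → ℝ}

lemma measurePreserving_one_sub : MeasurePreserving (fun γ : ℝ => 1 - γ) volume volume :=
  Measure.measurePreserving_sub_left volume 1

lemma setIntegral_one_sub_preimage (hx : ∀ α, x (1 - α) = -x α) (s : Set ℝ) :
    ∫ γ in (1 - ·) ⁻¹' s, x γ = -∫ γ in s, x γ := by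
  have := measurePreserving_one_sub.setIntegral_preimage_emb
    (MeasurableEquiv.subLeft (1 : ℝ)).measurableEmbedding x s
  simp only [hx, integral_neg] at this
  linarith

lemma hkNbhd_one_sub (hx : ∀ α, x (1 - α) = -x α) (α : ℝ) :
    hkNbhd x (1 - α) = (1 - ·) ⁻¹' hkNbhd x α := by
  ext γ
  have : |x γ - -x α| = |-x γ - x α| := by rw [← abs_neg]; congr 1; ring
  simp only [hkNbhd, mem_ofPred_eq, mem_preimage, mem_Icc, hx, this]
  constructor <;> rintro ⟨⟨h₀, h₁⟩, h⟩ <;> exact ⟨⟨by linarith, by linarith⟩, h⟩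

lemma volume_hkNbhd_one_sub (hx : ∀ α, x (1 - α) = -x α) (α : ℝ) :
    volume (hkNbhd x (1 - α)) = volume (hkNbhd x α) := by
  rw [hkNbhd_one_sub hx]
  exact measurePreserving_one_sub.measure_preimage_emb
    (MeasurableEquiv.subLeft (1 : ℝ)).measurableEmbedding _

lemma hkT_one_sub (hx : ∀ α, x (1 - α) = -x α) (α : ℝ) : hkT x (1 - α) = -hkT x α := by
  rw [hkT, hkT, volume_hkNbhd_one_sub hx, hkNbhd_one_sub hx, setIntegral_one_sub_preimage hx,
    neg_div]

end Reflection

local notation "κ" => (51 / 100 : ℝ)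
local notation "ρ" => (511 / 1000 : ℝ)

/-- Profiles, antisymmetric about `1/2`, with a small central cluster `[1 - κ, κ]` of opinions near
`0` and two nearly flat wings `[0, 1 - ρ]` and `[ρ, 1]` of opinions near `±3/2`. Antisymmetry is
assumed on all of `ℝ`, and only the right half of the profile is constrained explicitly. -/
structure IsThreeCluster (x : ℝ → ℝ) : Prop where
  odd : ∀ α, x (1 - α) = -x α
  monotoneOn : MonotoneOn x (Icc 0 1)
  center_le : x κ ≤ 1 / 5
  le_wing : 7 / 5 ≤ x ρ
  wing_le : x 1 ≤ 3 / 2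
  lipschitzOnWith_wing : LipschitzOnWith (1 / 100) x (Icc ρ 1)

namespace IsThreeCluster

variable {x : ℝ → ℝ} {α β γ : ℝ}

lemma apply_half (h : IsThreeCluster x) : x (1 / 2) = 0 := by
  have := h.odd (1 / 2)
  norm_num at this
  linarith

lemma integrableOn (h : IsThreeCluster x) : IntegrableOn x (Icc 0 1) :=
  h.monotoneOn.integrableOn_isCompact isCompact_Icc

lemma apply_le_apply_one (h : IsThreeCluster x) (hγ : γ ∈ Icc (0 : ℝ) 1) : x γ ≤ x 1 :=
  h.monotoneOn hγ (by simp) hγ.2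

lemma apply_edge_le_apply_one (h : IsThreeCluster x) : x ρ ≤ x 1 :=
  h.apply_le_apply_one (by norm_num)

lemma apply_edge_le (h : IsThreeCluster x) (hγ : γ ∈ Icc ρ 1) : x ρ ≤ x γ :=
  h.monotoneOn (by norm_num) ⟨by linarith [hγ.1], hγ.2⟩ hγ.1

lemma apply_one_sub_apply_edge_le (h : IsThreeCluster x) : x 1 - x ρ ≤ 1 / 200 := by
  have := sub_le_mul_of_lipschitzOnWith h.lipschitzOnWith_wing (a := ρ) (b := 1)
    (by norm_num) (by norm_num) (by norm_num)
  norm_num at this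
  linarith

lemma lt_edge_of_apply_lt (h : IsThreeCluster x) (hγ : γ ∈ Icc (0 : ℝ) 1) (hlt : x γ < x ρ) :
    γ < ρ :=
  h.monotoneOn.reflect_lt hγ (by norm_num) hlt

lemma one_sub_edge_lt_of_lt_apply (h : IsThreeCluster x) (hγ : γ ∈ Icc (0 : ℝ) 1)
    (hlt : -x ρ < x γ) : 1 - ρ < γ :=
  h.monotoneOn.reflect_lt (by norm_num) hγ (by rwa [h.odd])

lemma abs_apply_le_of_mem_center (h : IsThreeCluster x) (hγ : γ ∈ Icc (1 - κ) κ) :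
    |x γ| ≤ 1 / 5 := by
  have hγI : γ ∈ Icc (0 : ℝ) 1 := ⟨by linarith [hγ.1], by linarith [hγ.2]⟩
  have hle := h.monotoneOn hγI (b := κ) (by norm_num) hγ.2
  have hge := h.monotoneOn (a := 1 - κ) (by norm_num) hγI hγ.1
  rw [h.odd] at hge
  exact abs_le.2 ⟨by linarith [h.center_le], by linarith [h.center_le]⟩

lemma setAverage_center (h : IsThreeCluster x) : ⨍ γ in Icc (1 - κ) κ, x γ = 0 := by
  have := setIntegral_one_sub_preimage h.odd (Icc (1 - κ) κ)
  rw [preimage_const_sub_Icc, sub_sub_cancel] at this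
  rw [setAverage_eq, self_eq_neg.1 this, smul_zero]

lemma volumeReal_center : volume.real (Icc (1 - κ) κ) = 1 / 50 := by
  norm_num

lemma center_subset_hkNbhd (h : IsThreeCluster x) (hα : |x α| ≤ 4 / 5) :
    Icc (1 - κ) κ ⊆ hkNbhd x α := fun γ hγ =>
  ⟨⟨by linarith [hγ.1], by linarith [hγ.2]⟩,
    (abs_sub _ _).trans (by linarith [h.abs_apply_le_of_mem_center hγ])⟩

lemma one_div_fifty_le_volumeReal_hkNbhd (h : IsThreeCluster x) (hα : |x α| ≤ 4 / 5) :
    1 / 50 ≤ volume.real (hkNbhd x α) :=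
  volumeReal_center.ge.trans
    (measureReal_mono (h.center_subset_hkNbhd hα) (volume_hkNbhd_ne_top x α))

lemma wing_subset_hkNbhd (h : IsThreeCluster x) (hα : α ∈ Icc (0 : ℝ) 1)
    (hx : x 1 - 1 ≤ x α) : Icc ρ 1 ⊆ hkNbhd x α := by
  intro γ hγ
  have hγI : γ ∈ Icc (0 : ℝ) 1 := ⟨by linarith [hγ.1], hγ.2⟩
  refine mem_hkNbhd hγI ⟨?_, by linarith [h.apply_le_apply_one hγI]⟩
  linarith [h.apply_edge_le hγ, h.apply_le_apply_one hα, h.le_wing, h.wing_le]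

lemma one_fourth_le_volumeReal_hkNbhd (h : IsThreeCluster x) (hα : α ∈ Icc (0 : ℝ) 1)
    (hx : x 1 - 1 ≤ x α) : 1 / 4 ≤ volume.real (hkNbhd x α) :=
  le_trans (by norm_num)
    (measureReal_mono (h.wing_subset_hkNbhd hα hx) (volume_hkNbhd_ne_top x α))

lemma volumeReal_hkNbhd_pos (h : IsThreeCluster x) (hα : α ∈ Icc (0 : ℝ) 1) :
    0 < volume.real (hkNbhd x α) := by
  have hwing : ∀ β ∈ Icc (0 : ℝ) 1, 4 / 5 ≤ x β → 0 < volume.real (hkNbhd x β) :=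
    fun β hβ hx => by
      linarith [h.one_fourth_le_volumeReal_hkNbhd hβ (by linarith [h.wing_le])]
  rcases le_total |x α| (4 / 5) with hmid | hfar
  · linarith [h.one_div_fifty_le_volumeReal_hkNbhd hmid]
  rcases le_abs.1 hfar with hright | hleft
  · exact hwing α hα hright
  · rw [measureReal_def, ← volume_hkNbhd_one_sub h.odd]
    exact hwing (1 - α) ⟨by linarith [hα.2], by linarith [hα.1]⟩ (by rwa [h.odd])

lemma monotoneOn_hkT (h : IsThreeCluster x) : MonotoneOn (hkT x) (Icc 0 1) :=
  fun _ hα _ hβ hαβ => hkT_le_hkT h.integrableOn (h.volumeReal_hkNbhd_pos hα)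
    (h.volumeReal_hkNbhd_pos hβ) (h.monotoneOn hα hβ hαβ)

lemma hkT_le_apply_one (h : IsThreeCluster x) (hα : α ∈ Icc (0 : ℝ) 1) : hkT x α ≤ x 1 :=
  hkT_le_of_forall_le h.integrableOn (h.volumeReal_hkNbhd_pos hα) fun _ => h.apply_le_apply_one

lemma hkT_le_of_abs_le (h : IsThreeCluster x) (hα : |x α| ≤ 4 / 5) :
    hkT x α ≤ x 1 * (1 - 1 / 50 / volume.real (hkNbhd x α)) := by
  have hcenter := h.center_subset_hkNbhd hα
  have hpos : 0 < volume.real (hkNbhd x α) := by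
    linarith [h.one_div_fifty_le_volumeReal_hkNbhd hα]
  have := setAverage_le_add_mul_div (nullMeasurableSet_hkNbhd h.integrableOn α)
    nullMeasurableSet_Icc hcenter hpos (integrableOn_hkNbhd h.integrableOn α)
    h.setAverage_center.le fun γ hγ => h.apply_le_apply_one hγ.1.1
  rwa [measureReal_sdiff hcenter measurableSet_Icc (volume_hkNbhd_ne_top x α), volumeReal_center,
    sub_div, div_self hpos.ne', ← hkT_eq_setAverage, sub_zero, zero_add] at this

lemma hkT_le_of_apply_lt (h : IsThreeCluster x) (hα : α ∈ Icc (0 : ℝ) 1)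
    (hx : x α < x ρ - 1) : hkT x α ≤ 3 / 20 := by
  have hhalf : (1 / 2 : ℝ) ∈ Icc (0 : ℝ) 1 := by norm_num
  rcases le_total (x α) 0 with hneg | hpos
  · have hT_half : hkT x (1 / 2) = 0 := by
      have := hkT_one_sub h.odd (1 / 2)
      norm_num at this
      linarith
    have := hkT_le_hkT h.integrableOn (h.volumeReal_hkNbhd_pos hα)
      (h.volumeReal_hkNbhd_pos hhalf) (by rwa [h.apply_half])
    linarith
  have hle_one := h.wing_le
  have hedge := h.apply_edge_le_apply_one
  have hnonneg : 0 ≤ x 1 := by linarith [h.le_wing]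
  have hvol : volume.real (hkNbhd x α) ≤ 11 / 500 := by
    have : hkNbhd x α ⊆ Icc (1 - ρ) ρ := fun γ hγ => by
      have hγx := mem_Icc_of_mem_hkNbhd hγ
      exact ⟨(h.one_sub_edge_lt_of_lt_apply hγ.1 (by linarith [hγx.1, h.le_wing])).le,
        (h.lt_edge_of_apply_lt hγ.1 (by linarith [hγx.2])).le⟩
    exact (measureReal_mono this (by simp)).trans (by norm_num)
  have hratio : 10 / 11 ≤ 1 / 50 / volume.real (hkNbhd x α) := by
    rw [le_div_iff₀ (h.volumeReal_hkNbhd_pos hα)]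
    linarith
  have hT := h.hkT_le_of_abs_le (α := α) (by rw [abs_of_nonneg hpos]; linarith)
  calc hkT x α ≤ x 1 * (1 - 1 / 50 / volume.real (hkNbhd x α)) := hT
    _ ≤ x 1 * (1 - 10 / 11) := by gcongr
    _ ≤ 3 / 20 := by linarith

lemma setAverage_sub_le_hkT (h : IsThreeCluster x) (hα : α ∈ Icc (0 : ℝ) 1)
    (hx : x 1 - 1 ≤ x α) {t : Set ℝ} (ht : NullMeasurableSet t) (htα : t ⊆ hkNbhd x α)
    (ht₀ : 0 < volume.real t) :
    (⨍ γ in t, x γ) - 8 * volume.real (hkNbhd x α \ t) ≤ hkT x α := by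
  have hT := HegselmannKrause.setAverage_sub_le_hkT h.integrableOn ht htα ht₀
  have hvol := h.one_fourth_le_volumeReal_hkNbhd hα hx
  have : volume.real (hkNbhd x α \ t) / volume.real (hkNbhd x α)
      ≤ volume.real (hkNbhd x α \ t) / (1 / 4) := by gcongr
  linarith

lemma lt_hkT_of_le_apply (h : IsThreeCluster x) (hα : α ∈ Icc (0 : ℝ) 1)
    (hx : x 1 - 1 ≤ x α) : 6 / 5 < hkT x α := by
  have hwing := h.wing_subset_hkNbhd hα hx
  have hwing₀ : 0 < volume.real (Icc ρ 1) := by norm_num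
  have hmean : 7 / 5 ≤ ⨍ γ in Icc ρ 1, x γ :=
    setAverage_mem_of_forall_mem (convex_Ici _) isClosed_Ici nullMeasurableSet_Icc hwing₀
      ((integrableOn_hkNbhd h.integrableOn α).mono_set hwing)
      fun γ hγ => h.le_wing.trans (h.apply_edge_le hγ)
  have hvol : volume.real (hkNbhd x α \ Icc ρ 1) ≤ 11 / 500 := by
    have : hkNbhd x α \ Icc ρ 1 ⊆ Icc (1 - ρ) ρ := fun γ hγ => by
      have hγx := mem_Icc_of_mem_hkNbhd hγ.1
      refine ⟨(h.one_sub_edge_lt_of_lt_apply hγ.1.1 ?_).le, ?_⟩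
      · linarith [hγx.1, h.apply_edge_le_apply_one, h.le_wing]
      · by_contra! hlt
        exact hγ.2 ⟨hlt.le, hγ.1.1.2⟩
    exact (measureReal_mono this (by simp)).trans (by norm_num)
  linarith [h.setAverage_sub_le_hkT hα hx nullMeasurableSet_Icc hwing hwing₀]

lemma two_mul_sub_le_hkT_sub (h : IsThreeCluster x) (hα : α ∈ Icc (0 : ℝ) 1)
    (hβ : β ∈ Icc (0 : ℝ) 1) (hαβ : α ≤ β) (hxα : x ρ - 1 ≤ x α) (hxβ : x β ≤ x 1 - 1) :
    2 * (x β - x α) ≤ hkT x β - hkT x α := by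
  have hle := h.le_wing
  have hle_one := h.wing_le
  have hwidth := h.apply_one_sub_apply_edge_le
  have hx := h.monotoneOn hα hβ hαβ
  have hpos := h.volumeReal_hkNbhd_pos hα
  have hdrag : hkT x α ≤ x ρ - 1 / 50 := by
    have hvol : volume.real (hkNbhd x α) ≤ 1 := by
      simpa using measureReal_mono (μ := volume) (hkNbhd_subset_Icc x α) (by simp)
    have hratio : 1 / 50 ≤ 1 / 50 / volume.real (hkNbhd x α) :=
      le_div_self (by norm_num) hpos hvol
    have := h.hkT_le_of_abs_le (α := α) (abs_le.2 ⟨by linarith, by linarith⟩)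
    nlinarith
  -- As the wing has slope at most `1/100`, its agents enter the view at rate at least `100`.
  have hnew : 100 * (x β - x α) ≤ volume.real (hkNbhd x β \ hkNbhd x α) := by
    have hlip := sub_le_mul_volumeReal_preimage_Ioc (by norm_num) h.lipschitzOnWith_wing
      (p := x α + 1) (q := x β + 1) (by linarith) (by linarith)
    have hsub : Icc ρ 1 ∩ x ⁻¹' Ioc (x α + 1) (x β + 1) ⊆ hkNbhd x β \ hkNbhd x α :=
      fun γ hγ => ⟨mem_hkNbhd ⟨by linarith [hγ.1.1], hγ.1.2⟩ ⟨by linarith [hγ.2.1], hγ.2.2⟩,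
        fun hγα => by linarith [hγ.2.1, (mem_Icc_of_mem_hkNbhd hγα).2]⟩
    have := measureReal_mono hsub (measure_ne_top_of_subset sdiff_subset
      (volume_hkNbhd_ne_top x β))
    push_cast at hlip
    linarith
  calc 2 * (x β - x α) = 1 / 50 * (100 * (x β - x α)) := by ring
    _ ≤ (x α + 1 - hkT x α) * volume.real (hkNbhd x β \ hkNbhd x α) := by
        gcongr <;> linarith
    _ ≤ hkT x β - hkT x α :=
        mul_volumeReal_sdiff_le_hkT_sub h.integrableOn hpos (h.volumeReal_hkNbhd_pos hβ) hx

lemma two_lt_apply_one_sub_apply_zero (h : IsThreeCluster x) : 2 < x 1 - x 0 := by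
  have hzero := h.odd 1
  rw [sub_self] at hzero
  linarith [h.le_wing, h.apply_edge_le_apply_one]

end IsThreeCluster

/-- A three-cluster profile whose links between the clusters are populated by a mass of order `u`.
Along the iteration `u` is halved, and the lower bound on the wing may decrease by multiples of
`u`, which are summable. -/
structure IsThreeClusterAtScale (x : ℝ → ℝ) (u : ℝ) : Prop extends IsThreeCluster x where
  le_wing_add : 7 / 5 + 4 / 125 * u ≤ x ρ
  volumeReal_link_le :
    volume.real (Icc 0 1 ∩ x ⁻¹' Ico (1 / 5) (7 / 5 + 4 / 125 * u)) ≤ u / 500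
  link_steep : ∀ α ∈ Icc (0 : ℝ) 1, ∀ β ∈ Icc (0 : ℝ) 1, α ≤ β → 1 / 5 ≤ x α → x β ≤ 6 / 5 →
    1000 * (β - α) ≤ u * (x β - x α)

namespace IsThreeClusterAtScale

variable {x : ℝ → ℝ} {u α β : ℝ}

lemma le_hkT_of_le_apply (h : IsThreeClusterAtScale x u) (hα : α ∈ Icc (0 : ℝ) 1)
    (hx : 6 / 5 ≤ x α) : 7 / 5 + 4 / 125 * (u / 2) ≤ hkT x α := by
  set c := 7 / 5 + 4 / 125 * u with hc
  set t := hkNbhd x α ∩ (Icc 0 1 ∩ x ⁻¹' Ici c)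
  have hx_one : x 1 - 1 ≤ x α := by linarith [h.wing_le]
  have ht : NullMeasurableSet t := (nullMeasurableSet_hkNbhd h.integrableOn α).inter
    (nullMeasurableSet_Icc_inter_preimage h.integrableOn measurableSet_Ici)
  have ht₀ : 0 < volume.real t := by
    have hwing : Icc ρ 1 ⊆ t := fun γ hγ => ⟨h.wing_subset_hkNbhd hα hx_one hγ,
      ⟨by linarith [hγ.1], hγ.2⟩, h.le_wing_add.trans (h.apply_edge_le hγ)⟩
    exact lt_of_lt_of_le (by norm_num) (measureReal_mono hwing
      (measure_ne_top_of_subset inter_subset_left (volume_hkNbhd_ne_top x α)))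
  have hmean : c ≤ ⨍ γ in t, x γ :=
    setAverage_mem_of_forall_mem (convex_Ici _) isClosed_Ici ht ht₀
      ((integrableOn_hkNbhd h.integrableOn α).mono_set inter_subset_left) fun γ hγ => hγ.2.2
  have hlink : hkNbhd x α \ t ⊆ Icc 0 1 ∩ x ⁻¹' Ico (1 / 5) c := fun γ hγ =>
    ⟨hγ.1.1, by linarith [(mem_Icc_of_mem_hkNbhd hγ.1).1],
      not_le.1 fun hcγ => hγ.2 ⟨hγ.1, hγ.1.1, hcγ⟩⟩
  have hvol := (measureReal_mono hlink (volume_ne_top_of_subset_Icc inter_subset_left)).trans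
    h.volumeReal_link_le
  have := h.setAverage_sub_le_hkT hα hx_one ht inter_subset_left ht₀
  linarith

lemma le_apply_of_le_hkT (h : IsThreeClusterAtScale x u) (hα : α ∈ Icc (0 : ℝ) 1)
    (hT : 1 / 5 ≤ hkT x α) : x ρ - 1 ≤ x α := by
  by_contra! hx
  linarith [h.hkT_le_of_apply_lt hα hx]

lemma lipschitzOnWith_hkT (h : IsThreeClusterAtScale x u) (hu : u ≤ 1) :
    LipschitzOnWith (1 / 100) (hkT x) (Icc ρ 1) := by
  have hI : Icc ρ 1 ⊆ Icc 0 1 := Icc_subset_Icc_left (by norm_num)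
  refine lipschitzOnWith_of_monotoneOn (h.monotoneOn_hkT.mono hI) fun α hα β hβ hαβ => ?_
  have hle := h.le_wing
  have hle_one := h.wing_le
  have hx := h.monotoneOn (hI hα) (hI hβ) hαβ
  have hxα := h.apply_edge_le hα
  have hxβ := h.apply_le_apply_one (hI hβ)
  have hnested : hkNbhd x β ⊆ hkNbhd x α := fun γ hγ => by
    have := mem_Icc_of_mem_hkNbhd hγ
    exact mem_hkNbhd hγ.1 ⟨by linarith [this.1], by linarith [h.apply_le_apply_one hγ.1]⟩
  have hT := h.setAverage_sub_le_hkT (hI hα) (by linarith)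
    (nullMeasurableSet_hkNbhd h.integrableOn β) hnested (h.volumeReal_hkNbhd_pos (hI hβ))
  rw [← hkT_eq_setAverage] at hT
  have hvol : volume.real (hkNbhd x α \ hkNbhd x β) ≤ (x β - x α) / 1000 := by
    refine volumeReal_le_of_forall_sub_le (by linarith) fun p hp q hq hpq => ?_
    have hxp := (mem_Icc_of_mem_hkNbhd hp.1).1
    have hxq := lt_sub_one_of_mem_hkNbhd_sdiff hx hq
    have hxpq := h.monotoneOn hp.1.1 hq.1.1 hpq
    have hsteep := h.link_steep p hp.1.1 q hq.1.1 hpq (by linarith) (by linarith)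
    have := mul_le_mul_of_nonneg_right hu (sub_nonneg.2 hxpq)
    linarith
  have hlip := sub_le_mul_of_lipschitzOnWith h.lipschitzOnWith_wing hα hβ hαβ
  push_cast at hlip ⊢
  linarith

lemma volumeReal_link_hkT_le (h : IsThreeClusterAtScale x u) (hu : 0 ≤ u) :
    volume.real (Icc 0 1 ∩ hkT x ⁻¹' Ico (1 / 5) (7 / 5 + 4 / 125 * (u / 2))) ≤ u / 2 / 500 := by
  have hlink : ∀ γ ∈ Icc 0 1 ∩ hkT x ⁻¹' Ico (1 / 5) (7 / 5 + 4 / 125 * (u / 2)),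
      x γ ∈ Icc (1 / 5) (6 / 5) := fun γ ⟨hγ, hTγ⟩ => by
    refine ⟨by linarith [h.le_apply_of_le_hkT hγ hTγ.1, h.le_wing], ?_⟩
    by_contra! hx
    exact hTγ.2.not_ge (h.le_hkT_of_le_apply hγ hx.le)
  refine volumeReal_le_of_forall_sub_le (by linarith) fun p hp q hq hpq => ?_
  have hxp := (hlink p hp).1
  have hxq := (hlink q hq).2
  have hsteep := h.link_steep p hp.1 q hq.1 hpq hxp hxq
  nlinarith

lemma link_steep_hkT (h : IsThreeClusterAtScale x u) (hu : 0 ≤ u) (hα : α ∈ Icc (0 : ℝ) 1)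
    (hβ : β ∈ Icc (0 : ℝ) 1) (hαβ : α ≤ β) (hTα : 1 / 5 ≤ hkT x α) (hTβ : hkT x β ≤ 6 / 5) :
    1000 * (β - α) ≤ u / 2 * (hkT x β - hkT x α) := by
  have hxα := h.le_apply_of_le_hkT hα hTα
  have hxβ : x β ≤ x 1 - 1 := by
    by_contra! hx
    exact hTβ.not_gt (h.lt_hkT_of_le_apply hβ hx.le)
  calc 1000 * (β - α) ≤ u * (x β - x α) :=
        h.link_steep α hα β hβ hαβ (by linarith [h.le_wing]) (by linarith [h.wing_le])
    _ = u / 2 * (2 * (x β - x α)) := by ring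
    _ ≤ u / 2 * (hkT x β - hkT x α) := by
        gcongr
        exact h.two_mul_sub_le_hkT_sub hα hβ hαβ hxα hxβ

lemma hkT_half (h : IsThreeClusterAtScale x u) (hu₀ : 0 ≤ u) (hu₁ : u ≤ 1) :
    IsThreeClusterAtScale (hkT x) (u / 2) where
  odd := hkT_one_sub h.odd
  monotoneOn := h.monotoneOn_hkT
  center_le := by
    have := h.hkT_le_of_apply_lt (α := κ) (by norm_num) (by linarith [h.center_le, h.le_wing])
    linarith
  le_wing := by
    have := h.le_hkT_of_le_apply (α := ρ) (by norm_num) (by linarith [h.le_wing])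
    linarith
  wing_le := (h.hkT_le_apply_one (by simp)).trans h.wing_le
  lipschitzOnWith_wing := h.lipschitzOnWith_hkT hu₁
  le_wing_add := h.le_hkT_of_le_apply (by norm_num) (by linarith [h.le_wing])
  volumeReal_link_le := h.volumeReal_link_hkT_le hu₀
  link_steep _ hα _ hβ := h.link_steep_hkT hu₀ hα hβ

lemma hkT_iterate (h : IsThreeClusterAtScale x 1) (t : ℕ) :
    IsThreeClusterAtScale (hkT^[t] x) ((1 / 2) ^ t) := by
  induction t with
  | zero => simpa using h
  | succ t ih =>
    rw [Function.iterate_succ_apply', pow_succ, mul_one_div]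
    exact ih.hkT_half (by positivity) (pow_le_one₀ (by norm_num) (by norm_num))

end IsThreeClusterAtScale

/-- The piecewise linear function rising from `0` to `1` on `[κ - 1/2, ρ - 1/2]`. -/
noncomputable def ramp (s : ℝ) : ℝ := max 0 (min 1 (1000 * s - 10))

lemma ramp_of_le {s : ℝ} (hs : s ≤ 1 / 100) : ramp s = 0 :=
  max_eq_left (min_le_of_right_le (by linarith))

lemma ramp_of_ge {s : ℝ} (hs : 11 / 1000 ≤ s) : ramp s = 1 := by
  rw [ramp, min_eq_left (by linarith), max_eq_right zero_le_one]

lemma ramp_of_mem_Icc {s : ℝ} (hs : s ∈ Icc (1 / 100) (11 / 1000)) : ramp s = 1000 * s - 10 := by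
  rw [ramp, min_eq_right (by linarith [hs.2]), max_eq_right (by linarith [hs.1])]

lemma monotone_ramp : Monotone ramp := fun a b hab => by
  unfold ramp
  gcongr

lemma ramp_sub_le {a b : ℝ} (hab : a ≤ b) : ramp b - ramp a ≤ 1000 * (b - a) := by
  unfold ramp
  grind

/-- The initial profile: central cluster and wings of slope `1/100`, joined by two links of width
`1/1000` across each of which the opinion rises by more than `29/20`. -/
noncomputable def initialProfile (α : ℝ) : ℝ :=
  (α - 1 / 2) / 100 + 29 / 20 * (ramp (α - 1 / 2) - ramp (1 / 2 - α))

lemma mul_sub_le_initialProfile_sub {α β : ℝ} (h : α ≤ β) :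
    1 / 100 * (β - α) ≤ initialProfile β - initialProfile α := by
  unfold initialProfile
  have hright : ramp (α - 1 / 2) ≤ ramp (β - 1 / 2) := monotone_ramp (by linarith)
  have hleft : ramp (1 / 2 - β) ≤ ramp (1 / 2 - α) := monotone_ramp (by linarith)
  linarith

lemma initialProfile_sub_le_mul_sub {α β : ℝ} (h : α ≤ β) :
    initialProfile β - initialProfile α ≤ 3000 * (β - α) := by
  unfold initialProfile
  have hright := ramp_sub_le (a := α - 1 / 2) (b := β - 1 / 2) (by linarith)
  have hleft := ramp_sub_le (a := 1 / 2 - β) (b := 1 / 2 - α) (by linarith)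
  linarith

lemma monotone_initialProfile : Monotone initialProfile := fun α β h => by
  linarith [mul_sub_le_initialProfile_sub h]

lemma regular_initialProfile : Regular initialProfile :=
  regular_of_forall_slope_mem (by norm_num) (fun _ _ => mul_sub_le_initialProfile_sub)
    fun _ _ => initialProfile_sub_le_mul_sub

lemma initialProfile_of_ge {α : ℝ} (h : ρ ≤ α) :
    initialProfile α = (α - 1 / 2) / 100 + 29 / 20 := by
  rw [initialProfile, ramp_of_ge (by linarith), ramp_of_le (by linarith)]
  ring

lemma initialProfile_of_mem_Icc {α : ℝ} (h : α ∈ Icc κ ρ) :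
    initialProfile α = (α - 1 / 2) / 100 + 1450 * (α - κ) := by
  rw [initialProfile, ramp_of_mem_Icc ⟨by linarith [h.1], by linarith [h.2]⟩,
    ramp_of_le (by linarith [h.1])]
  ring

lemma mem_Icc_of_initialProfile_mem {α : ℝ} (h : initialProfile α ∈ Ico (1 / 5) (29 / 20)) :
    α ∈ Icc κ ρ := by
  constructor
  · by_contra! hlt
    have := monotone_initialProfile hlt.le
    rw [initialProfile_of_mem_Icc (α := κ) (by norm_num)] at this
    linarith [h.1]
  · by_contra! hlt
    have := initialProfile_of_ge hlt.le
    linarith [h.2]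

lemma isThreeCluster_initialProfile : IsThreeCluster initialProfile where
  odd α := by
    rw [initialProfile, initialProfile, show 1 - α - 1 / 2 = 1 / 2 - α by ring,
      show 1 / 2 - (1 - α) = α - 1 / 2 by ring]
    ring
  monotoneOn := monotone_initialProfile.monotoneOn _
  center_le := by rw [initialProfile_of_mem_Icc] <;> norm_num
  le_wing := by rw [initialProfile_of_ge] <;> norm_num
  wing_le := by rw [initialProfile_of_ge] <;> norm_num
  lipschitzOnWith_wing := by
    refine lipschitzOnWith_of_monotoneOn (monotone_initialProfile.monotoneOn _)
      fun α hα β hβ _ => ?_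
    rw [initialProfile_of_ge hα.1, initialProfile_of_ge hβ.1]
    push_cast
    linarith

lemma isThreeClusterAtScale_initialProfile : IsThreeClusterAtScale initialProfile 1 where
  toIsThreeCluster := isThreeCluster_initialProfile
  le_wing_add := by rw [initialProfile_of_ge] <;> norm_num
  volumeReal_link_le := by
    have hlink : Icc 0 1 ∩ initialProfile ⁻¹' Ico (1 / 5) (7 / 5 + 4 / 125 * 1) ⊆ Icc κ ρ :=
      fun γ hγ => mem_Icc_of_initialProfile_mem ⟨hγ.2.1, by linarith [hγ.2.2]⟩
    exact (measureReal_mono hlink (by simp)).trans (by norm_num)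
  link_steep α _ β _ hαβ hα hβ := by
    have hx := monotone_initialProfile hαβ
    rw [initialProfile_of_mem_Icc (mem_Icc_of_initialProfile_mem ⟨hα, by linarith⟩),
      initialProfile_of_mem_Icc (mem_Icc_of_initialProfile_mem ⟨by linarith, by linarith⟩)]
    linarith

end HegselmannKrause

/-- There is a regular initial opinion function whose HK iterates always
retain opinions separated by more than two. -/
theorem exists_regular_never_consensus :
    ∃ x₀ : ℝ → ℝ, Regular x₀ ∧
      ∀ t : ℕ, (hkT^[t] x₀) 1 - (hkT^[t] x₀) 0 > 2 :=
  ⟨HegselmannKrause.initialProfile, HegselmannKrause.regular_initialProfile, fun t =>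
    (HegselmannKrause.isThreeClusterAtScale_initialProfile.hkT_iterate
      t).two_lt_apply_one_sub_apply_zero⟩
end

section
/- Under the construction setup with assumptions (I)–(VI): every agent belonging to B_y had, at the previous step, an opinion in x(A) + 1, i.e. B_y ⊆ {α ∈ [0,1] : x(α) ∈ x(A) + 1}; moreover y(A) ⊆ [0, ε]. Consequently A_y ⊇ A_x and B_y ⊆ B_x. -/
open MeasureTheory Set

/-!
Reflection about `1/2` turns the bounds on `x` near `0` into bounds near `1`, and `B_x ⊆ B` forces
`x ≥ d + ε` from the left end of `C` on. Compare `Tx(α)` with a threshold `c` through the sign of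
the integral of `x - c` over the neighbourhood of `α`.

* If `x α ≤ 2ε`, the agent sees all of `A_x`, whose mean is below `ε - 2ε²`, and otherwise only
  agents of the much lighter `B`; hence `Tx(α) < ε`.
* If `x α < x 0 + 1`, it sees all of `A_x` but nothing of `E`, and `B ∪ C ∪ D` has length about
  `ε²|A|`; hence `Tx(α) < 2ε`.
* If `x α > x a₁ + 1`, it sees nothing of `A`. Either it sees all of `C`, whose mean
  `d + 3ε/2` outweighs the lighter `B`, or all it sees is above `d + ε`; hence `Tx(α) > d + ε`.

So an opinion can land in `[2ε, d + ε]` only from `[x 0 + 1, x a₁ + 1] = x(A) + 1`.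
-/

section General

lemma setIntegral_le_add_mul_of_le_indicator {X : Type*} [MeasurableSpace X] {μ : Measure X}
    {f : X → ℝ} {N S R : Set X} {K : ℝ} (hN : MeasurableSet N) (hS : MeasurableSet S)
    (hR : MeasurableSet R) (hSN : S ⊆ N) (hf : IntegrableOn f N μ) (hμR : μ R ≠ ⊤) (hK : 0 ≤ K)
    (hle : ∀ t ∈ N \ S, f t ≤ R.indicator (fun _ => K) t) :
    ∫ t in N, f t ∂μ ≤ (∫ t in S, f t ∂μ) + K * μ.real R := by
  have hint : Integrable (R.indicator fun _ => K) μ :=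
    (integrable_indicator_iff hR).2 (integrableOn_const hμR)
  calc ∫ t in N, f t ∂μ
      = (∫ t in S, f t ∂μ) + ∫ t in N \ S, f t ∂μ := by rw [setIntegral_sdiff hS hf hSN]; ring
    _ ≤ (∫ t in S, f t ∂μ) + ∫ t in N \ S, R.indicator (fun _ => K) t ∂μ := by
        exact (add_le_add_iff_left _).2
          (setIntegral_mono_on (hf.mono_set sdiff_subset) hint.integrableOn (hN.diff hS) hle)
    _ ≤ (∫ t in S, f t ∂μ) + ∫ t, R.indicator (fun _ => K) t ∂μ := by
        exact (add_le_add_iff_left _).2 (setIntegral_le_integral hint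
          (Filter.Eventually.of_forall fun t => indicator_nonneg (fun _ _ => hK) t))
    _ = (∫ t in S, f t ∂μ) + K * μ.real R := by
        rw [integral_indicator_const K hR, smul_eq_mul, mul_comm]

lemma setIntegral_sub_const {X : Type*} [MeasurableSpace X] {μ : Measure X} {f : X → ℝ}
    {S : Set X} (hf : IntegrableOn f S μ) (hμS : μ S ≠ ⊤) (c : ℝ) :
    ∫ t in S, (f t - c) ∂μ = (∫ t in S, f t ∂μ) - c * μ.real S := by
  rw [integral_sub hf (integrableOn_const hμS), setIntegral_const, smul_eq_mul, mul_comm]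

lemma intervalIntegral_eq_of_add_reflect {f : ℝ → ℝ} {a b m : ℝ}
    (hf : IntervalIntegrable f volume a b)
    (hsymm : ∀ t ∈ uIcc a b, f t + f (a + b - t) = 2 * m) :
    ∫ t in a..b, f t = m * (b - a) := by
  have hreflect : ∫ t in a..b, f (a + b - t) = ∫ t in a..b, f t := by
    rw [intervalIntegral.integral_comp_sub_left, add_sub_cancel_right, add_sub_cancel_left]
  have hcongr : ∫ t in a..b, f (a + b - t) = ∫ t in a..b, (2 * m - f t) :=
    intervalIntegral.integral_congr fun t ht => eq_sub_of_add_eq' (hsymm t ht)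
  rw [intervalIntegral.integral_sub (by simp) hf, intervalIntegral.integral_const,
    smul_eq_mul] at hcongr
  linarith

lemma le_left_of_forall_mem_Icc_le {X Y : Type*} [ConditionallyCompleteLinearOrder X]
    [TopologicalSpace X] [OrderTopology X] [DenselyOrdered X] [LinearOrder Y] [TopologicalSpace Y]
    [OrderClosedTopology Y] [DenselyOrdered Y] {f : X → Y} {a b : X} {u v : Y} (hab : a ≤ b)
    (hf : ContinuousOn f (Icc a b)) (huv : u < v) (hvb : v ≤ f b)
    (hle : ∀ t ∈ Icc a b, f t ∈ Icc u v → t ≤ a) : v ≤ f a := by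
  by_contra! hva
  obtain ⟨w, hw, hwv⟩ := exists_between (max_lt hva huv)
  obtain ⟨haw, huw⟩ := max_lt_iff.1 hw
  obtain ⟨t, ht, rfl⟩ := intermediate_value_Ioo hab hf ⟨haw, hwv.trans_le hvb⟩
  exact (hle t (Ioo_subset_Icc_self ht) ⟨huw.le, hwv.le⟩).not_gt ht.1

end General

/-- The preimage `x⁻¹(J)` under an opinion function `x : [0,1] → ℝ`, which is encoded as a function
on `ℝ`; hence the intersection with `[0,1]`. -/
def hkPreimage (x : ℝ → ℝ) (J : Set ℝ) : Set ℝ :=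
  {α ∈ Icc (0 : ℝ) 1 | x α ∈ J}

section Update

variable {x : ℝ → ℝ} {α c : ℝ}

lemma volume_ne_top_of_subset_unitInterval {S : Set ℝ} (hS : S ⊆ Icc 0 1) : volume S ≠ ⊤ :=
  measure_ne_top_of_subset hS measure_Icc_lt_top.ne

lemma sub_le_volume_real {p q : ℝ} {S : Set ℝ} (hpq : p ≤ q) (hpqS : Icc p q ⊆ S)
    (hS : S ⊆ Icc 0 1) : q - p ≤ volume.real S := by
  rw [← Real.volume_real_Icc_of_le hpq]
  exact measureReal_mono hpqS (volume_ne_top_of_subset_unitInterval hS)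

lemma hkPreimage_subset (x : ℝ → ℝ) (J : Set ℝ) : hkPreimage x J ⊆ Icc 0 1 :=
  fun _ hβ => hβ.1

lemma hkNbhd_subset (x : ℝ → ℝ) (α : ℝ) : hkNbhd x α ⊆ Icc 0 1 :=
  fun _ hβ => hβ.1

lemma measurableSet_hkPreimage (hx : ContinuousOn x (Icc 0 1)) {J : Set ℝ} (hJ : IsClosed J) :
    MeasurableSet (hkPreimage x J) :=
  (hx.preimage_isClosed_of_isClosed isClosed_Icc hJ).measurableSet

lemma measurableSet_hkNbhd (hx : ContinuousOn x (Icc 0 1)) : MeasurableSet (hkNbhd x α) :=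
  measurableSet_hkPreimage hx Metric.isClosed_closedBall

lemma integrableOn_sub_const_of_subset (hx : ContinuousOn x (Icc 0 1)) {S : Set ℝ}
    (hS : S ⊆ Icc 0 1) (c : ℝ) : IntegrableOn (fun β => x β - c) S :=
  ((hx.sub continuousOn_const).integrableOn_compact isCompact_Icc).mono_set hS

lemma integrableOn_const_sub_of_subset (hx : ContinuousOn x (Icc 0 1)) {S : Set ℝ}
    (hS : S ⊆ Icc 0 1) (c : ℝ) : IntegrableOn (fun β => c - x β) S :=
  ((continuousOn_const.sub hx).integrableOn_compact isCompact_Icc).mono_set hS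

lemma setIntegral_sub_const_of_subset (hx : ContinuousOn x (Icc 0 1)) {S : Set ℝ}
    (hS : S ⊆ Icc 0 1) (c : ℝ) :
    ∫ β in S, (x β - c) = (∫ β in S, x β) - c * volume.real S :=
  setIntegral_sub_const ((hx.integrableOn_compact isCompact_Icc).mono_set hS)
    (volume_ne_top_of_subset_unitInterval hS) c

lemma volume_real_hkNbhd_pos (hx : ContinuousOn x (Icc 0 1)) (hα : α ∈ Icc (0 : ℝ) 1) :
    0 < volume.real (hkNbhd x α) := by
  obtain ⟨U, hU, hαU, hUx⟩ := mem_nhdsWithin.1 (hx α hα (Metric.closedBall_mem_nhds (x α) one_pos))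
  have hne : (U ∩ Ioo 0 1).Nonempty :=
    mem_closure_iff.1 (by rwa [closure_Ioo zero_ne_one]) U hU hαU
  have hsub : U ∩ Ioo 0 1 ⊆ hkNbhd x α := fun β hβ =>
    ⟨Ioo_subset_Icc_self hβ.2, hUx ⟨hβ.1, Ioo_subset_Icc_self hβ.2⟩⟩
  exact ENNReal.toReal_pos
    (((hU.inter isOpen_Ioo).measure_pos volume hne).trans_le (measure_mono hsub)).ne'
    (volume_ne_top_of_subset_unitInterval (hkNbhd_subset x α))

lemma hkT_lt_iff (hx : ContinuousOn x (Icc 0 1)) (hα : α ∈ Icc (0 : ℝ) 1) :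
    hkT x α < c ↔ ∫ β in hkNbhd x α, (x β - c) < 0 := by
  rw [setIntegral_sub_const_of_subset hx (hkNbhd_subset x α), sub_neg]
  exact div_lt_iff₀ (volume_real_hkNbhd_pos hx hα)

lemma lt_hkT_iff (hx : ContinuousOn x (Icc 0 1)) (hα : α ∈ Icc (0 : ℝ) 1) :
    c < hkT x α ↔ ∫ β in hkNbhd x α, (c - x β) < 0 := by
  simp_rw [← neg_sub _ c]
  rw [integral_neg, setIntegral_sub_const_of_subset hx (hkNbhd_subset x α), neg_neg_iff_pos,
    sub_pos]
  exact lt_div_iff₀ (volume_real_hkNbhd_pos hx hα)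

lemma le_hkT (hx : ContinuousOn x (Icc 0 1)) (hα : α ∈ Icc (0 : ℝ) 1)
    (hc : ∀ β ∈ hkNbhd x α, c ≤ x β) : c ≤ hkT x α := by
  rw [← not_lt, hkT_lt_iff hx hα, not_lt]
  exact setIntegral_nonneg (measurableSet_hkNbhd hx) fun β hβ => sub_nonneg.2 (hc β hβ)

lemma sub_one_le_hkT (hx : ContinuousOn x (Icc 0 1)) (hα : α ∈ Icc (0 : ℝ) 1) :
    x α - 1 ≤ hkT x α :=
  le_hkT hx hα fun _ hβ => by linarith [(abs_le.1 hβ.2).1]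

lemma hkT_lt_of_le_indicator (hx : ContinuousOn x (Icc 0 1)) (hα : α ∈ Icc (0 : ℝ) 1)
    {S : Set ℝ} {p q K : ℝ} (hS : MeasurableSet S) (hSN : S ⊆ hkNbhd x α) (hpq : p ≤ q)
    (hK : 0 ≤ K)
    (hle : ∀ β ∈ hkNbhd x α \ S, x β - c ≤ (Icc p q).indicator (fun _ => K) β)
    (hneg : (∫ β in S, (x β - c)) + K * (q - p) < 0) : hkT x α < c := by
  rw [hkT_lt_iff hx hα]
  rw [← Real.volume_real_Icc_of_le hpq] at hneg
  exact (setIntegral_le_add_mul_of_le_indicator (measurableSet_hkNbhd hx) hS measurableSet_Icc hSN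
    (integrableOn_sub_const_of_subset hx (hkNbhd_subset x α) c) measure_Icc_lt_top.ne hK
    hle).trans_lt hneg

lemma lt_hkT_of_le_indicator (hx : ContinuousOn x (Icc 0 1)) (hα : α ∈ Icc (0 : ℝ) 1)
    {S : Set ℝ} {p q K : ℝ} (hS : MeasurableSet S) (hSN : S ⊆ hkNbhd x α) (hpq : p ≤ q)
    (hK : 0 ≤ K)
    (hle : ∀ β ∈ hkNbhd x α \ S, c - x β ≤ (Icc p q).indicator (fun _ => K) β)
    (hneg : (∫ β in S, (c - x β)) + K * (q - p) < 0) : c < hkT x α := by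
  rw [lt_hkT_iff hx hα]
  rw [← Real.volume_real_Icc_of_le hpq] at hneg
  exact (setIntegral_le_add_mul_of_le_indicator (measurableSet_hkNbhd hx) hS measurableSet_Icc hSN
    (integrableOn_const_sub_of_subset hx (hkNbhd_subset x α) c) measure_Icc_lt_top.ne hK
    hle).trans_lt hneg

end Update

/-- The points `0 ≤ a₁ ≤ a₂ ≤ a₃ ≤ a₄ ≤ 1` cutting `[0,1]` into the consecutive intervals
`A, B, C, D, E` with `|B| = |D| = ε²|C|` and `|C| = ε²|A| = ε²|E|`. The ordering of the points
follows from the four equations. -/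
structure IsHKPartition (ε a₁ a₂ a₃ a₄ : ℝ) : Prop where
  length_B : a₂ - a₁ = ε ^ 2 * (a₃ - a₂)
  length_C : a₃ - a₂ = ε ^ 2 * a₁
  length_D : a₄ - a₃ = ε ^ 2 * (a₃ - a₂)
  length_E : 1 - a₄ = a₁

namespace IsHKPartition

variable {ε a₁ a₂ a₃ a₄ : ℝ} (h : IsHKPartition ε a₁ a₂ a₃ a₄)
include h

lemma a₁_pos : 0 < a₁ := by
  have hone : (2 + ε ^ 2 + 2 * ε ^ 4) * a₁ = 1 := by
    linear_combination -h.length_B - (1 + 2 * ε ^ 2) * h.length_C - h.length_D - h.length_E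
  exact pos_of_mul_pos_right (hone ▸ one_pos) (by positivity)

lemma a₂_le_a₃ : a₂ ≤ a₃ :=
  sub_nonneg.1 (h.length_C ▸ mul_nonneg (sq_nonneg ε) h.a₁_pos.le)

lemma a₁_le_a₂ : a₁ ≤ a₂ :=
  sub_nonneg.1 (h.length_B ▸ mul_nonneg (sq_nonneg ε) (sub_nonneg.2 h.a₂_le_a₃))

lemma a₃_le_a₄ : a₃ ≤ a₄ :=
  sub_nonneg.1 (h.length_D ▸ mul_nonneg (sq_nonneg ε) (sub_nonneg.2 h.a₂_le_a₃))

lemma a₂_add_a₃ : a₂ + a₃ = 1 := by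
  linarith [h.length_B, h.length_D, h.length_E]

lemma a₁_mem : a₁ ∈ Icc (0 : ℝ) 1 :=
  ⟨h.a₁_pos.le, by linarith [h.a₁_le_a₂, h.a₂_le_a₃, h.a₂_add_a₃, h.a₁_pos]⟩

lemma a₂_mem : a₂ ∈ Icc (0 : ℝ) 1 :=
  ⟨h.a₁_pos.le.trans h.a₁_le_a₂, by linarith [h.a₁_le_a₂, h.a₂_le_a₃, h.a₂_add_a₃, h.a₁_pos]⟩

lemma a₃_mem : a₃ ∈ Icc (0 : ℝ) 1 :=
  ⟨h.a₂_mem.1.trans h.a₂_le_a₃, by linarith [h.a₂_mem.1, h.a₂_add_a₃]⟩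

lemma a₄_mem : a₄ ∈ Icc (0 : ℝ) 1 :=
  ⟨h.a₃_mem.1.trans h.a₃_le_a₄, by linarith [h.length_E, h.a₁_pos]⟩

end IsHKPartition

/-- The construction setup for the profile `x`, without the bounds on its derivative: `ε - Ā > 2ε²`
is assumption (VI), `B_x ⊆ B` is (II), and, `x` being monotone and nonnegative, `x a₁ ≤ ε` is (III).
The paper takes `d = 3/2`. -/
structure HKSetup (ε d a₁ a₂ a₃ a₄ : ℝ) (x : ℝ → ℝ) : Prop
    extends IsHKPartition ε a₁ a₂ a₃ a₄ where
  ε_pos : 0 < ε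
  ε_le : ε ≤ 1 / 4
  le_d : 1 + ε ≤ d
  d_le : d ≤ 2 - 2 * ε
  continuousOn : ContinuousOn x (Icc 0 1)
  monotoneOn : MonotoneOn x (Icc 0 1)
  nonneg : ∀ α ∈ Icc (0 : ℝ) 1, 0 ≤ x α
  antisymm : ∀ s ∈ Icc (0 : ℝ) (1 / 2), x (1 / 2 + s) + x (1 / 2 - s) = 2 * x (1 / 2)
  x_half : x (1 / 2) = d + 3 * ε / 2
  x_a₁_le : x a₁ ≤ ε
  preimage_subset_B : hkPreimage x (Icc (2 * ε) (d + ε)) ⊆ Icc a₁ a₂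
  mean_lt : ε - (∫ α in hkPreimage x (Icc 0 (2 * ε)), x α) /
    volume.real (hkPreimage x (Icc 0 (2 * ε))) > 2 * ε ^ 2

namespace HKSetup

variable {ε d a₁ a₂ a₃ a₄ : ℝ} {x : ℝ → ℝ} (h : HKSetup ε d a₁ a₂ a₃ a₄ x) {α : ℝ}
include h

lemma x_add_x_one_sub {t : ℝ} (ht : t ∈ Icc (0 : ℝ) 1) : x t + x (1 - t) = 2 * x (1 / 2) := by
  rcases le_total t (1 / 2) with hle | hle
  · have hs := h.antisymm (1 / 2 - t) ⟨by linarith, by linarith [ht.1]⟩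
    ring_nf at hs ⊢
    linarith
  · have hs := h.antisymm (t - 1 / 2) ⟨by linarith, by linarith [ht.2]⟩
    ring_nf at hs ⊢
    linarith

lemma le_x_a₂ : d + ε ≤ x a₂ := by
  have hhalf : a₂ ≤ 1 / 2 := by linarith [h.a₂_le_a₃, h.a₂_add_a₃]
  have hsub : Icc a₂ (1 / 2) ⊆ Icc 0 1 := Icc_subset_Icc h.a₂_mem.1 (by norm_num)
  exact le_left_of_forall_mem_Icc_le hhalf (h.continuousOn.mono hsub)
    (show 2 * ε < d + ε by linarith [h.le_d, h.ε_le]) (by linarith [h.x_half, h.ε_pos])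
    fun t ht hxt => (h.preimage_subset_B ⟨hsub ht, hxt⟩).2

lemma x_a₃_le : x a₃ ≤ d + 2 * ε := by
  have hreflect := h.x_add_x_one_sub h.a₂_mem
  rw [show 1 - a₂ = a₃ by linarith [h.a₂_add_a₃]] at hreflect
  linarith [h.x_half, h.le_x_a₂]

lemma le_x_a₄ : 2 * d + 2 * ε ≤ x a₄ := by
  have hreflect := h.x_add_x_one_sub h.a₄_mem
  rw [h.length_E] at hreflect
  linarith [h.x_half, h.x_a₁_le]

lemma Icc_a₁_subset_preimage : Icc 0 a₁ ⊆ hkPreimage x (Icc 0 (2 * ε)) := fun β hβ =>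
  have hβI : β ∈ Icc (0 : ℝ) 1 := ⟨hβ.1, hβ.2.trans h.a₁_mem.2⟩
  ⟨hβI, h.nonneg β hβI,
    by linarith [h.monotoneOn hβI h.a₁_mem hβ.2, h.x_a₁_le, h.ε_pos]⟩

lemma setIntegral_preimage_sub_le {c : ℝ} (hc : ε ≤ c) :
    ∫ β in hkPreimage x (Icc 0 (2 * ε)), (x β - c) ≤ (ε - 2 * ε ^ 2 - c) * a₁ := by
  have hlen : a₁ ≤ volume.real (hkPreimage x (Icc 0 (2 * ε))) := by
    simpa only [sub_zero] using
      sub_le_volume_real h.a₁_pos.le h.Icc_a₁_subset_preimage (hkPreimage_subset x _)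
  have hmean := (div_lt_iff₀ (h.a₁_pos.trans_le hlen)).1 (lt_sub_comm.1 h.mean_lt)
  calc ∫ β in hkPreimage x (Icc 0 (2 * ε)), (x β - c)
      = (∫ β in hkPreimage x (Icc 0 (2 * ε)), x β)
          - c * volume.real (hkPreimage x (Icc 0 (2 * ε))) :=
        setIntegral_sub_const_of_subset h.continuousOn (hkPreimage_subset x _) c
    _ ≤ (ε - 2 * ε ^ 2 - c) * volume.real (hkPreimage x (Icc 0 (2 * ε))) := by linarith
    _ ≤ (ε - 2 * ε ^ 2 - c) * a₁ :=
        mul_le_mul_of_nonpos_left hlen (by linarith [sq_nonneg ε])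

lemma hkT_lt_ε (hα : α ∈ hkPreimage x (Icc 0 (2 * ε))) : hkT x α < ε := by
  have hε := h.ε_le
  apply hkT_lt_of_le_indicator h.continuousOn hα.1
    (measurableSet_hkPreimage h.continuousOn isClosed_Icc) (K := 2) _ h.a₁_le_a₂ zero_le_two
  · rintro β ⟨⟨hβI, hβα⟩, hβ⟩
    have hxβ : x β ≤ 1 + 2 * ε := by linarith [(abs_le.1 hβα).2, hα.2.2]
    have h2ε : 2 * ε < x β := lt_of_not_ge fun hle => hβ ⟨hβI, h.nonneg β hβI, hle⟩
    rw [indicator_of_mem (h.preimage_subset_B ⟨hβI, h2ε.le, by linarith [h.le_d]⟩)]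
    linarith
  · calc (∫ β in hkPreimage x (Icc 0 (2 * ε)), (x β - ε)) + 2 * (a₂ - a₁)
        ≤ (ε - 2 * ε ^ 2 - ε) * a₁ + 2 * (a₂ - a₁) := by
          gcongr
          exact h.setIntegral_preimage_sub_le le_rfl
      _ = -(2 * (1 - ε ^ 2) * (ε ^ 2 * a₁)) := by rw [h.length_B, h.length_C]; ring
      _ < 0 := by
          have hsq : 0 < 1 - ε ^ 2 := by nlinarith [h.ε_pos]
          have hε₀ := h.ε_pos
          have ha₁ := h.a₁_pos
          exact neg_neg_of_pos (by positivity)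
  · rintro β ⟨hβI, hβ⟩
    exact ⟨hβI, abs_le.2 ⟨by linarith [hβ.1, hα.2.2], by linarith [hβ.2, hα.2.1]⟩⟩

lemma hkT_lt_two_mul_ε (hα : α ∈ Icc (0 : ℝ) 1) (hxα : x α < x 0 + 1) : hkT x α < 2 * ε := by
  have hε := h.ε_le
  have h0 : (0 : ℝ) ∈ Icc (0 : ℝ) 1 := left_mem_Icc.2 zero_le_one
  have hx0 : x 0 ≤ ε := (h.monotoneOn h0 h.a₁_mem h.a₁_pos.le).trans h.x_a₁_le
  apply hkT_lt_of_le_indicator h.continuousOn hα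
    (measurableSet_hkPreimage h.continuousOn isClosed_Icc) (K := 2) _
    (h.a₁_le_a₂.trans (h.a₂_le_a₃.trans h.a₃_le_a₄)) zero_le_two
  · rintro β ⟨⟨hβI, hβα⟩, hβ⟩
    have hxβ : x β < 2 + ε := by linarith [(abs_le.1 hβα).2]
    have ha₁ : a₁ ≤ β := le_of_not_ge fun hle => hβ (h.Icc_a₁_subset_preimage ⟨hβI.1, hle⟩)
    have ha₄ : β ≤ a₄ := le_of_not_ge fun hle => by
      linarith [h.monotoneOn h.a₄_mem hβI hle, h.le_x_a₄, h.le_d, h.ε_pos]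
    rw [indicator_of_mem (mem_Icc.2 ⟨ha₁, ha₄⟩)]
    linarith [h.ε_pos]
  · have hlen : a₄ - a₁ = (ε ^ 2 + 2 * ε ^ 4) * a₁ := by
      linear_combination h.length_B + (1 + 2 * ε ^ 2) * h.length_C + h.length_D
    calc (∫ β in hkPreimage x (Icc 0 (2 * ε)), (x β - 2 * ε)) + 2 * (a₄ - a₁)
        ≤ (ε - 2 * ε ^ 2 - 2 * ε) * a₁ + 2 * (a₄ - a₁) := by
          gcongr
          exact h.setIntegral_preimage_sub_le (by linarith [h.ε_pos])
      _ = -((1 - 4 * ε ^ 3) * (ε * a₁)) := by rw [hlen]; ring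
      _ < 0 := by
          have hcube : ε ^ 3 ≤ (1 / 4) ^ 3 := pow_le_pow_left₀ h.ε_pos.le hε 3
          exact neg_neg_of_pos (mul_pos (by linarith) (mul_pos h.ε_pos h.a₁_pos))
  · rintro β ⟨hβI, hβ⟩
    exact ⟨hβI, abs_le.2 ⟨by linarith [h.monotoneOn h0 hβI hβI.1],
      by linarith [hβ.2, h.nonneg α hα]⟩⟩

lemma setIntegral_C_const_sub (c : ℝ) :
    ∫ β in Icc a₂ a₃, (c - x β) = (c - x (1 / 2)) * (a₃ - a₂) := by
  have hsub : Icc a₂ a₃ ⊆ Icc 0 1 := Icc_subset_Icc h.a₂_mem.1 h.a₃_mem.2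
  rw [integral_Icc_eq_integral_Ioc, ← intervalIntegral.integral_of_le h.a₂_le_a₃]
  refine intervalIntegral_eq_of_add_reflect
    ((continuousOn_const.sub (h.continuousOn.mono hsub)).intervalIntegrable_of_Icc h.a₂_le_a₃)
    fun t ht => ?_
  rw [uIcc_of_le h.a₂_le_a₃] at ht
  rw [h.a₂_add_a₃]
  linarith [h.x_add_x_one_sub (hsub ht)]

lemma lt_hkT_of_x_le (hα : α ∈ Icc (0 : ℝ) 1) (ha₁ : x a₁ + 1 < x α) (hle : x α ≤ d + 1 + ε) :
    d + ε < hkT x α := by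
  have hε := h.ε_pos
  have hd := h.d_le
  have hxa₁ := h.nonneg a₁ h.a₁_mem
  have hK : 0 ≤ 2 - ε := by linarith [h.ε_le]
  apply lt_hkT_of_le_indicator h.continuousOn hα measurableSet_Icc (S := Icc a₂ a₃) _
    h.a₁_le_a₂ hK
  · rintro β ⟨⟨hβI, hβα⟩, -⟩
    have hβa₁ : a₁ ≤ β := le_of_not_ge fun hβ => by
      linarith [h.monotoneOn hβI h.a₁_mem hβ, (abs_le.1 hβα).1]
    rcases le_total β a₂ with hβa₂ | hβa₂
    · rw [indicator_of_mem (mem_Icc.2 ⟨hβa₁, hβa₂⟩)]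
      linarith [h.nonneg β hβI]
    · have hxβ : d + ε ≤ x β := h.le_x_a₂.trans (h.monotoneOn h.a₂_mem hβI hβa₂)
      exact (sub_nonpos.2 hxβ).trans (indicator_nonneg (fun _ _ => hK) β)
  · rw [h.setIntegral_C_const_sub, h.x_half]
    calc (d + ε - (d + 3 * ε / 2)) * (a₃ - a₂) + (2 - ε) * (a₂ - a₁)
        = -((1 / 2 - (2 - ε) * ε) * (ε * (ε ^ 2 * a₁))) := by rw [h.length_B, h.length_C]; ring
      _ < 0 := by
          have hcoeff : 0 < 1 / 2 - (2 - ε) * ε := by nlinarith [h.ε_le]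
          have hlenA := h.a₁_pos
          exact neg_neg_of_pos (by positivity)
  · intro β hβ
    have hβI : β ∈ Icc (0 : ℝ) 1 := Icc_subset_Icc h.a₂_mem.1 h.a₃_mem.2 hβ
    have hlow : d + ε ≤ x β := h.le_x_a₂.trans (h.monotoneOn h.a₂_mem hβI hβ.1)
    have hhigh : x β ≤ d + 2 * ε := (h.monotoneOn hβI h.a₃_mem hβ.2).trans h.x_a₃_le
    exact ⟨hβI, abs_le.2 ⟨by linarith, by linarith⟩⟩

lemma lt_hkT (hα : α ∈ Icc (0 : ℝ) 1) (ha₁ : x a₁ + 1 < x α) : d + ε < hkT x α := by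
  rcases le_or_gt (x α) (d + 1 + ε) with hle | hlt
  · exact h.lt_hkT_of_x_le hα ha₁ hle
  · linarith [sub_one_le_hkT h.continuousOn hα]

lemma exists_x_eq_add_one (hα : α ∈ hkPreimage (hkT x) (Icc (2 * ε) (d + ε))) :
    ∃ β ∈ Icc 0 a₁, x α = x β + 1 := by
  have hlow : x 0 + 1 ≤ x α := le_of_not_gt fun hlt =>
    (h.hkT_lt_two_mul_ε hα.1 hlt).not_ge hα.2.1
  have hhigh : x α ≤ x a₁ + 1 := le_of_not_gt fun hlt => (h.lt_hkT hα.1 hlt).not_ge hα.2.2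
  obtain ⟨β, hβ, hxβ⟩ := intermediate_value_Icc h.a₁_pos.le
    (h.continuousOn.mono (Icc_subset_Icc_right h.a₁_mem.2))
    (show x α - 1 ∈ Icc (x 0) (x a₁) from ⟨by linarith, by linarith⟩)
  exact ⟨β, hβ, by linarith⟩

end HKSetup

theorem hk_next_B_general {ε d a₁ a₂ a₃ a₄ : ℝ} {x : ℝ → ℝ} (h : HKSetup ε d a₁ a₂ a₃ a₄ x) :
    (∀ α ∈ hkPreimage (hkT x) (Icc (2 * ε) (d + ε)), ∃ β ∈ Icc 0 a₁, x α = x β + 1) ∧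
      hkT x '' Icc 0 a₁ ⊆ Icc 0 ε ∧
      hkPreimage x (Icc 0 (2 * ε)) ⊆ hkPreimage (hkT x) (Icc 0 (2 * ε)) ∧
      hkPreimage (hkT x) (Icc (2 * ε) (d + ε)) ⊆ hkPreimage x (Icc (2 * ε) (d + ε)) := by
  have hT : ∀ α ∈ hkPreimage x (Icc 0 (2 * ε)), hkT x α ∈ Icc 0 ε := fun α hα =>
    ⟨le_hkT h.continuousOn hα.1 fun β hβ => h.nonneg β hβ.1, (h.hkT_lt_ε hα).le⟩
  refine ⟨fun α hα => h.exists_x_eq_add_one hα,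
    image_subset_iff.2 fun α hα => hT α (h.Icc_a₁_subset_preimage hα),
    fun α hα => ⟨hα.1, (hT α hα).1, by linarith [(hT α hα).2, h.ε_pos]⟩, fun α hα => ?_⟩
  obtain ⟨β, hβ, hαβ⟩ := h.exists_x_eq_add_one hα
  have hβI : β ∈ Icc (0 : ℝ) 1 := ⟨hβ.1, hβ.2.trans h.a₁_mem.2⟩
  have hxβ : x β ≤ ε := (h.monotoneOn hβI h.a₁_mem hβ.2).trans h.x_a₁_le
  exact ⟨hα.1, by linarith [h.ε_le, h.nonneg β hβI], by linarith [h.le_d, h.ε_pos]⟩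

/-- Lemma 1 of the paper: only agents with previous opinion in `x(A) + 1` can
end up in `B_{t+1}`; moreover `y(A) ⊆ [0, ε]`, hence `A_{t+1} ⊇ A_t` and `B_{t+1} ⊆ B_t`. -/
theorem hk_next_B
    -- the confidence/width parameter ε and the fixed constant d = 3/2
    (ε d : ℝ) (hε : 0 < ε) (hε' : ε ≤ 1/10) (hd : d = 3/2)
    -- partition of [0,1] into consecutive closed intervals A, B, C, D, E
    (a₁ a₂ a₃ a₄ : ℝ)
    (h₀₁ : 0 ≤ a₁) (h₁₂ : a₁ ≤ a₂) (h₂₃ : a₂ ≤ a₃) (h₃₄ : a₃ ≤ a₄) (h₄₅ : a₄ ≤ 1)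
    (A B C D E : Set ℝ)
    (hA : A = Icc 0 a₁) (hB : B = Icc a₁ a₂) (hC : C = Icc a₂ a₃)
    (hD : D = Icc a₃ a₄) (hE : E = Icc a₄ 1)
    -- |B| = |D| = ε²|C|, |C| = ε²|A| = ε²|E| (symmetric about 1/2)
    (hlenB : a₂ - a₁ = ε^2 * (a₃ - a₂))
    (hlenD : a₄ - a₃ = ε^2 * (a₃ - a₂))
    (hlenC : a₃ - a₂ = ε^2 * a₁)
    (hlenE : 1 - a₄ = a₁)
    -- the opinion function x : regular, nonnegative, anti-symmetric about 1/2
    (x : ℝ → ℝ) (hreg : Regular x)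
    (hnonneg : ∀ α ∈ Icc (0:ℝ) 1, 0 ≤ x α)
    (hsym : ∀ s ∈ Icc (0:ℝ) (1/2), x (1/2 + s) + x (1/2 - s) = 2 * x (1/2))
    (hmid : x (1/2) = d + 3*ε/2)
    -- the sets A_x = x⁻¹([0,2ε]), B_x = x⁻¹([2ε, d+ε]) and the mean Ā on A_x
    (Ax Bx : Set ℝ) (Abar : ℝ)
    (hAx : Ax = {α ∈ Icc (0:ℝ) 1 | x α ∈ Icc 0 (2*ε)})
    (hBx : Bx = {α ∈ Icc (0:ℝ) 1 | x α ∈ Icc (2*ε) (d + ε)})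
    (hAbar : Abar = (∫ α in Ax, x α) / (volume Ax).toReal)
    -- derivative bounds e, s > 0
    (e s : ℝ) (he : 0 < e) (hs : 0 < s)
    -- Assumptions (I)–(VI)
    (hI : A ⊆ Ax)
    (hII : Bx ⊆ B)
    (hIII : x '' A ⊆ Icc 0 ε)
    (hIV : ∀ α ∈ A, DifferentiableAt ℝ x α → deriv x α ≤ e)
    (hV : ∀ α ∈ Bx, DifferentiableAt ℝ x α → s ≤ deriv x α)
    (hVI : ε - Abar > 2*ε^2)
    -- the updated opinion function y = Tx
    (y : ℝ → ℝ) (hy : y = hkT x)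
    (Ay By : Set ℝ)
    (hAy : Ay = {α ∈ Icc (0:ℝ) 1 | y α ∈ Icc 0 (2*ε)})
    (hBy : By = {α ∈ Icc (0:ℝ) 1 | y α ∈ Icc (2*ε) (d + ε)}) :
    (∀ α ∈ By, ∃ β ∈ A, x α = x β + 1) ∧
    y '' A ⊆ Icc 0 ε ∧
    Ax ⊆ Ay ∧ By ⊆ Bx := by
  subst hd hA hB hy hAy hBy hAx hBx hAbar
  exact hk_next_B_general
    { length_B := hlenB, length_C := hlenC, length_D := hlenD, length_E := hlenE
      ε_pos := hε, ε_le := by linarith, le_d := by linarith, d_le := by linarith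
      continuousOn := hreg.1, monotoneOn := hreg.2.1, nonneg := hnonneg, antisymm := hsym
      x_half := hmid, x_a₁_le := (hIII (mem_image_of_mem x (right_mem_Icc.2 h₀₁))).2
      preimage_subset_B := hII, mean_lt := hVI }
end

section
/- Under the construction setup with assumptions (I)–(VI): if β ∈ [0,1] is an agent whose opinion satisfies x(β) = x(0) + 1 (i.e. x(β) equals the minimum of x(A) plus one), then the updated opinion satisfies y(β) < Ā + 2ε², and hence y(β) < ε. -/
open MeasureTheory Set

/-!
An agent `β` with `x β ≤ x 0 + 1` sees every agent of the low-opinion set `A_x`. The remaining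
agents it sees lie in `(a₁, a₄)`, because by anti-symmetry opinions on `E` are at least
`2d + 2ε > 2 + ε ≥ x β + 1`. So they carry little mass: on `B ∪ C`, of length `ε² (1 + ε²) |A|`,
opinions are at most `d + 2ε`, by anti-symmetry and because the levels in `[2ε, d + ε]` are all
passed inside `B`; on `D`, of length `ε⁴ |A|`, the visible ones are at most `2 + ε`. They therefore
add less than `2ε² |A|` to the integral of the opinions over `A_x`, which raises the average by less
than `2ε²`.
-/

section Averages

theorem setAverage_eq_div {α : Type*} [MeasurableSpace α] (μ : Measure α) (f : α → ℝ) (s : Set α) :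
    ⨍ t in s, f t ∂μ = (∫ t in s, f t ∂μ) / μ.real s := by
  rw [setAverage_eq, smul_eq_mul, inv_mul_eq_div]

theorem setAverage_lt_setAverage_add {α : Type*} [MeasurableSpace α] {μ : Measure α} {f : α → ℝ}
    {s t : Set α} {c : ℝ} (hst : s ⊆ t) (hs : MeasurableSet s) (ht : μ t ≠ ⊤)
    (hf : IntegrableOn f t μ) (hc : 0 ≤ (⨍ u in s, f u ∂μ) + c)
    (hlt : ∫ u in t \ s, f u ∂μ < c * μ.real s) :
    ⨍ u in t, f u ∂μ < (⨍ u in s, f u ∂μ) + c := by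
  have hs_integral : μ.real s * ⨍ u in s, f u ∂μ = ∫ u in s, f u ∂μ :=
    measure_smul_setAverage f (measure_ne_top_of_subset hst ht)
  have ht_integral : ∫ u in t, f u ∂μ = (∫ u in s, f u ∂μ) + ∫ u in t \ s, f u ∂μ := by
    rw [← integral_inter_add_sdiff hs hf, inter_eq_self_of_subset_right hst]
  have ht_pos : 0 < μ.real t := by
    refine measureReal_nonneg.lt_of_ne' fun ht_zero => hlt.ne ?_
    have ht_null : μ t = 0 := (measureReal_eq_zero_iff ht).1 ht_zero
    rw [setIntegral_measure_zero _ (measure_mono_null sdiff_subset ht_null),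
      measureReal_def, measure_mono_null hst ht_null, ENNReal.toReal_zero, mul_zero]
  rw [setAverage_eq_div μ f t, div_lt_iff₀ ht_pos]
  calc ∫ u in t, f u ∂μ
      < μ.real s * (⨍ u in s, f u ∂μ) + c * μ.real s := by linarith
    _ = ((⨍ u in s, f u ∂μ) + c) * μ.real s := by ring
    _ ≤ ((⨍ u in s, f u ∂μ) + c) * μ.real t := by
        gcongr

theorem norm_setIntegral_le_of_subset_Icc {E : Type*} [NormedAddCommGroup E] [NormedSpace ℝ E]
    {f : ℝ → E} {s : Set ℝ} {a b C : ℝ} (hab : a ≤ b) (hs : s ⊆ Icc a b) (hC : 0 ≤ C)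
    (hf : ∀ t ∈ s, ‖f t‖ ≤ C) : ‖∫ t in s, f t‖ ≤ C * (b - a) := by
  calc ‖∫ t in s, f t‖
      ≤ C * volume.real s :=
        norm_setIntegral_le_of_norm_le_const ((measure_mono hs).trans_lt measure_Icc_lt_top) hf
    _ ≤ C * volume.real (Icc a b) := by
        gcongr
        exact measure_Icc_lt_top.ne
    _ = C * (b - a) := by rw [Real.volume_real_Icc_of_le hab]

theorem norm_setIntegral_le_of_subset_Icc_of_le_step {E : Type*} [NormedAddCommGroup E]
    [NormedSpace ℝ E] {f : ℝ → E} {s : Set ℝ} {a b c C D : ℝ} (hab : a ≤ b) (hbc : b ≤ c)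
    (hs : s ⊆ Icc a c) (hf : IntegrableOn f s) (hC : 0 ≤ C) (hD : 0 ≤ D)
    (hfC : ∀ t ∈ s, t ≤ b → ‖f t‖ ≤ C) (hfD : ∀ t ∈ s, b < t → ‖f t‖ ≤ D) :
    ‖∫ t in s, f t‖ ≤ C * (b - a) + D * (c - b) := by
  have hleft : ‖∫ t in s ∩ Iic b, f t‖ ≤ C * (b - a) :=
    norm_setIntegral_le_of_subset_Icc hab (fun _ ht => ⟨(hs ht.1).1, ht.2⟩) hC
      fun t ht => hfC t ht.1 ht.2
  have hright : ‖∫ t in s \ Iic b, f t‖ ≤ D * (c - b) :=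
    norm_setIntegral_le_of_subset_Icc hbc (fun _ ht => ⟨(not_le.1 ht.2).le, (hs ht.1).2⟩) hD
      fun t ht => hfD t ht.1 (not_le.1 ht.2)
  rw [← integral_inter_add_sdiff measurableSet_Iic hf]
  exact (norm_add_le _ _).trans (add_le_add hleft hright)

theorem hkT_eq_setAverage (x : ℝ → ℝ) (α : ℝ) : hkT x α = ⨍ γ in hkNbhd x α, x γ :=
  (setAverage_eq_div volume x _).symm

end Averages

section Functions

theorem le_apply_left_of_level_le {α δ : Type*} [ConditionallyCompleteLinearOrder α]
    [TopologicalSpace α] [OrderTopology α] [DenselyOrdered α] [LinearOrder δ] [TopologicalSpace δ]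
    [OrderClosedTopology δ] {f : α → δ} {a b : α} {v : δ} (hab : a ≤ b)
    (hf : ContinuousOn f (Icc a b)) (hv : v ≤ f b) (hlevel : ∀ t ∈ Icc a b, f t = v → t ≤ a) :
    v ≤ f a := by
  by_contra! hlt
  obtain ⟨t, ht, htv⟩ := intermediate_value_Icc hab hf ⟨hlt.le, hv⟩
  obtain rfl : t = a := (hlevel t ht htv).antisymm ht.1
  exact hlt.ne htv

theorem add_reflect_eq_two_mul {x : ℝ → ℝ}
    (hsym : ∀ s ∈ Icc (0 : ℝ) (1 / 2), x (1 / 2 + s) + x (1 / 2 - s) = 2 * x (1 / 2))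
    {t : ℝ} (ht : t ∈ Icc (0 : ℝ) 1) : x t + x (1 - t) = 2 * x (1 / 2) := by
  rcases le_total t (1 / 2) with hle | hle
  · rw [add_comm]
    convert hsym (1 / 2 - t) ⟨by linarith, by linarith [ht.1]⟩ using 3 <;> ring
  · convert hsym (t - 1 / 2) ⟨by linarith, by linarith [ht.2]⟩ using 3 <;> ring

end Functions

/-- The endpoints `0, a₁, a₂, a₃, a₄, 1` cut `[0,1]` into the blocks `A, B, C, D, E` of the
construction. Only the lengths are recorded; they force the order of the endpoints. -/
structure IsBlockPartition (ε a₁ a₂ a₃ a₄ : ℝ) : Prop where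
  length_B : a₂ - a₁ = ε ^ 2 * (a₃ - a₂)
  length_C : a₃ - a₂ = ε ^ 2 * a₁
  length_D : a₄ - a₃ = ε ^ 2 * (a₃ - a₂)
  length_E : 1 - a₄ = a₁

namespace IsBlockPartition

variable {ε a₁ a₂ a₃ a₄ : ℝ}

theorem a₁_pos (h : IsBlockPartition ε a₁ a₂ a₃ a₄) : 0 < a₁ := by
  obtain ⟨hB, hC, hD, hE⟩ := h
  have htotal : a₁ * (2 + ε ^ 2 + 2 * ε ^ 4) = 1 := by
    rw [hC] at hB hD
    linear_combination -hB - hC - hD - hE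
  exact pos_of_mul_pos_left (htotal ▸ one_pos) (by positivity)

theorem a₂_sub_a₁ (h : IsBlockPartition ε a₁ a₂ a₃ a₄) : a₂ - a₁ = ε ^ 4 * a₁ := by
  rw [h.length_B, h.length_C]
  ring

theorem a₄_sub_a₃ (h : IsBlockPartition ε a₁ a₂ a₃ a₄) : a₄ - a₃ = ε ^ 4 * a₁ := by
  rw [h.length_D, h.length_C]
  ring

theorem a₁_le_a₂ (h : IsBlockPartition ε a₁ a₂ a₃ a₄) : a₁ ≤ a₂ :=
  sub_nonneg.1 (h.a₂_sub_a₁ ▸ mul_nonneg (by positivity) h.a₁_pos.le)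

theorem a₂_le_a₃ (h : IsBlockPartition ε a₁ a₂ a₃ a₄) : a₂ ≤ a₃ :=
  sub_nonneg.1 (h.length_C ▸ mul_nonneg (sq_nonneg ε) h.a₁_pos.le)

theorem a₃_le_a₄ (h : IsBlockPartition ε a₁ a₂ a₃ a₄) : a₃ ≤ a₄ :=
  sub_nonneg.1 (h.a₄_sub_a₃ ▸ mul_nonneg (by positivity) h.a₁_pos.le)

theorem a₃_eq (h : IsBlockPartition ε a₁ a₂ a₃ a₄) : a₃ = 1 - a₂ := by
  linarith [h.length_B, h.length_D, h.length_E]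

theorem a₂_le_half (h : IsBlockPartition ε a₁ a₂ a₃ a₄) : a₂ ≤ 1 / 2 := by
  linarith [h.a₂_le_a₃, h.a₃_eq]

end IsBlockPartition

/-- The set `A_x = x⁻¹([0, 2ε])` of agents with low opinion. -/
def hkLow (x : ℝ → ℝ) (ε : ℝ) : Set ℝ :=
  {α ∈ Icc (0 : ℝ) 1 | x α ∈ Icc 0 (2 * ε)}

section LowOpinions

variable {x : ℝ → ℝ} {ε a₁ β : ℝ}

theorem measurableSet_hkLow (hx : ContinuousOn x (Icc 0 1)) : MeasurableSet (hkLow x ε) :=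
  (hx.preimage_isClosed_of_isClosed isClosed_Icc isClosed_Icc).measurableSet

theorem hkLow_subset_hkNbhd (hx : MonotoneOn x (Icc 0 1)) (hε : 2 * ε ≤ 1) (hβ₀ : 0 ≤ x β)
    (hβx : x β ≤ x 0 + 1) : hkLow x ε ⊆ hkNbhd x β := by
  rintro t ⟨ht, -, htε⟩
  have h0t : x 0 ≤ x t := hx (left_mem_Icc.2 zero_le_one) ht ht.1
  exact ⟨ht, abs_le.2 ⟨by linarith, by linarith⟩⟩

theorem Icc_subset_hkLow (ha₁ : a₁ ≤ 1) (hε : 0 ≤ ε) (hA : MapsTo x (Icc 0 a₁) (Icc 0 ε)) :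
    Icc 0 a₁ ⊆ hkLow x ε := fun _ ht =>
  ⟨⟨ht.1, ht.2.trans ha₁⟩, (hA ht).1, by linarith [(hA ht).2]⟩

theorem apply_le_two_add_of_mem_hkNbhd {t : ℝ} (ht : t ∈ hkNbhd x β)
    (hβx : x β ≤ x 0 + 1) (hx₀ : x 0 ≤ ε) : x t ≤ 2 + ε := by
  linarith [(abs_le.1 ht.2).2]

theorem setAverage_hkLow_nonneg (hx : ContinuousOn x (Icc 0 1)) : 0 ≤ ⨍ t in hkLow x ε, x t := by
  rw [setAverage_eq_div]
  exact div_nonneg (setIntegral_nonneg (measurableSet_hkLow hx) fun _ ht => ht.2.1)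
    measureReal_nonneg

end LowOpinions

section Blocks

variable {ε d a₁ a₂ a₃ a₄ β : ℝ} {x : ℝ → ℝ}

theorem hkNbhd_sdiff_hkLow_subset_Ioo (ha₁ : 0 ≤ a₁) (hE : 1 - a₄ = a₁) (hε : 0 < ε) (hd : 1 ≤ d)
    (hsym : ∀ s ∈ Icc (0 : ℝ) (1 / 2), x (1 / 2 + s) + x (1 / 2 - s) = 2 * x (1 / 2))
    (hmid : x (1 / 2) = d + 3 * ε / 2) (hA : MapsTo x (Icc 0 a₁) (Icc 0 ε))
    (hβx : x β ≤ x 0 + 1) : hkNbhd x β \ hkLow x ε ⊆ Ioo a₁ a₄ := by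
  rintro t ⟨htN, ht_low⟩
  refine ⟨?_, ?_⟩ <;> by_contra! ht
  · have hxt := hA ⟨htN.1.1, ht⟩
    exact ht_low ⟨htN.1, hxt.1, by linarith [hxt.2]⟩
  · have hreflect : x (1 - t) ≤ ε := (hA ⟨by linarith [htN.1.2], by linarith⟩).2
    have hvisible : x t ≤ 2 + ε :=
      apply_le_two_add_of_mem_hkNbhd htN hβx (hA (left_mem_Icc.2 ha₁)).2
    linarith [add_reflect_eq_two_mul hsym htN.1]

theorem IsBlockPartition.le_apply_a₂ (hP : IsBlockPartition ε a₁ a₂ a₃ a₄) (hε : 0 ≤ ε)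
    (hεd : ε ≤ d) (hx : ContinuousOn x (Icc 0 1)) (hmid : x (1 / 2) = d + 3 * ε / 2)
    (hB : {α ∈ Icc (0 : ℝ) 1 | x α ∈ Icc (2 * ε) (d + ε)} ⊆ Icc a₁ a₂) : d + ε ≤ x a₂ := by
  have h0a₂ : 0 ≤ a₂ := hP.a₁_pos.le.trans hP.a₁_le_a₂
  refine le_apply_left_of_level_le hP.a₂_le_half
    (hx.mono (Icc_subset_Icc h0a₂ (by norm_num))) (by linarith) fun t ht htx => ?_
  exact (hB ⟨⟨h0a₂.trans ht.1, by linarith [ht.2]⟩, by linarith, htx.le⟩).2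

theorem IsBlockPartition.apply_a₃_le (hP : IsBlockPartition ε a₁ a₂ a₃ a₄) (hε : 0 ≤ ε)
    (hεd : ε ≤ d) (hx : ContinuousOn x (Icc 0 1))
    (hsym : ∀ s ∈ Icc (0 : ℝ) (1 / 2), x (1 / 2 + s) + x (1 / 2 - s) = 2 * x (1 / 2))
    (hmid : x (1 / 2) = d + 3 * ε / 2)
    (hB : {α ∈ Icc (0 : ℝ) 1 | x α ∈ Icc (2 * ε) (d + ε)} ⊆ Icc a₁ a₂) : x a₃ ≤ d + 2 * ε := by
  have hreflect := add_reflect_eq_two_mul hsym (t := a₂)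
    ⟨hP.a₁_pos.le.trans hP.a₁_le_a₂, by linarith [hP.a₂_le_half]⟩
  rw [hP.a₃_eq]
  linarith [hP.le_apply_a₂ hε hεd hx hmid hB]

theorem IsBlockPartition.setIntegral_le_of_subset_Ioo {s : Set ℝ}
    (hP : IsBlockPartition ε a₁ a₂ a₃ a₄) (hε : 0 ≤ ε) (hd : 0 ≤ d) (hx : MonotoneOn x (Icc 0 1))
    (hx₀ : 0 ≤ x 0) (hxa₃ : x a₃ ≤ d + 2 * ε) (hs : s ⊆ Ioo a₁ a₄) (hxs : ∀ t ∈ s, x t ≤ 2 + ε)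
    (hint : IntegrableOn x s) :
    ∫ t in s, x t ≤ ((d + 2 * ε) * (1 + ε ^ 2) + (2 + ε) * ε ^ 2) * (ε ^ 2 * a₁) := by
  have h0a₁ := hP.a₁_pos
  have ha₁₃ : a₁ ≤ a₃ := hP.a₁_le_a₂.trans hP.a₂_le_a₃
  have ha₄ : a₄ ≤ 1 := by linarith [hP.length_E]
  have hunit : Ioo a₁ a₄ ⊆ Icc 0 1 := fun t ht => ⟨h0a₁.le.trans ht.1.le, ht.2.le.trans ha₄⟩
  have hnorm : ∀ t ∈ s, ‖x t‖ = x t := fun t ht => by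
    have htI := hunit (hs ht)
    exact Real.norm_of_nonneg (hx₀.trans (hx (left_mem_Icc.2 zero_le_one) htI htI.1))
  have hleft : ∀ t ∈ s, t ≤ a₃ → ‖x t‖ ≤ d + 2 * ε := fun t ht hta₃ => by
    rw [hnorm t ht]
    exact (hx (hunit (hs ht)) ⟨h0a₁.le.trans ha₁₃, hP.a₃_le_a₄.trans ha₄⟩ hta₃).trans hxa₃
  calc ∫ t in s, x t
      ≤ ‖∫ t in s, x t‖ := Real.le_norm_self _
    _ ≤ (d + 2 * ε) * (a₃ - a₁) + (2 + ε) * (a₄ - a₃) :=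
        norm_setIntegral_le_of_subset_Icc_of_le_step ha₁₃ hP.a₃_le_a₄
          (hs.trans Ioo_subset_Icc_self) hint (by positivity) (by positivity) hleft
          fun t ht _ => (hnorm t ht).trans_le (hxs t ht)
    _ = ((d + 2 * ε) * (1 + ε ^ 2) + (2 + ε) * ε ^ 2) * (ε ^ 2 * a₁) := by
        linear_combination (d + 2 * ε) * (hP.a₂_sub_a₁ + hP.length_C) + (2 + ε) * hP.a₄_sub_a₃

end Blocks

theorem hk_beta_escapes_left_general {ε d a₁ a₂ a₃ a₄ β : ℝ} {x : ℝ → ℝ} (hε : 0 < ε) (hd : 1 ≤ d)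
    (hεd : (d + 2 * ε) * (1 + ε ^ 2) + (2 + ε) * ε ^ 2 < 2)
    (hP : IsBlockPartition ε a₁ a₂ a₃ a₄)
    (hcont : ContinuousOn x (Icc 0 1)) (hmono : MonotoneOn x (Icc 0 1))
    (hsym : ∀ s ∈ Icc (0 : ℝ) (1 / 2), x (1 / 2 + s) + x (1 / 2 - s) = 2 * x (1 / 2))
    (hmid : x (1 / 2) = d + 3 * ε / 2)
    (hB : {α ∈ Icc (0 : ℝ) 1 | x α ∈ Icc (2 * ε) (d + ε)} ⊆ Icc a₁ a₂)
    (hA : MapsTo x (Icc 0 a₁) (Icc 0 ε))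
    (hβ : β ∈ Icc (0 : ℝ) 1) (hβx : x β ≤ x 0 + 1) :
    hkT x β < (⨍ α in hkLow x ε, x α) + 2 * ε ^ 2 := by
  have ha₁ : 0 < a₁ := hP.a₁_pos
  have ha₁' : a₁ ≤ 1 := by linarith [hP.a₁_le_a₂, hP.a₂_le_half]
  have hε' : 2 * ε ≤ 1 := by nlinarith [sq_nonneg ε, mul_pos hε (sq_pos_of_pos hε)]
  have hx₀ : x 0 ∈ Icc 0 ε := hA (left_mem_Icc.2 ha₁.le)
  have hxβ : 0 ≤ x β := hx₀.1.trans (hmono (left_mem_Icc.2 zero_le_one) hβ hβ.1)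
  have hN : hkNbhd x β ⊆ Icc 0 1 := fun _ ht => ht.1
  have hint : IntegrableOn x (hkNbhd x β) := hcont.integrableOn_Icc.mono_set hN
  have hlow : hkLow x ε ⊆ hkNbhd x β := hkLow_subset_hkNbhd hmono hε' hxβ hβx
  have hN_finite : volume (hkNbhd x β) ≠ ⊤ := measure_ne_top_of_subset hN measure_Icc_lt_top.ne
  have ha₁_le : a₁ ≤ volume.real (hkLow x ε) := by
    simpa [ha₁.le] using measureReal_mono (μ := volume) (Icc_subset_hkLow ha₁' hε.le hA)
      (measure_ne_top_of_subset hlow hN_finite)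
  rw [hkT_eq_setAverage]
  refine setAverage_lt_setAverage_add hlow (measurableSet_hkLow hcont) hN_finite hint
    (add_nonneg (setAverage_hkLow_nonneg hcont) (by positivity)) ?_
  calc ∫ t in hkNbhd x β \ hkLow x ε, x t
      ≤ ((d + 2 * ε) * (1 + ε ^ 2) + (2 + ε) * ε ^ 2) * (ε ^ 2 * a₁) :=
        hP.setIntegral_le_of_subset_Ioo hε.le (by linarith) hmono hx₀.1
          (hP.apply_a₃_le hε.le (by linarith) hcont hsym hmid hB)
          (hkNbhd_sdiff_hkLow_subset_Ioo ha₁.le hP.length_E hε hd hsym hmid hA hβx)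
          (fun _ ht => apply_le_two_add_of_mem_hkNbhd ht.1 hβx hx₀.2) (hint.mono_set sdiff_subset)
    _ < 2 * (ε ^ 2 * a₁) := by gcongr
    _ ≤ 2 * ε ^ 2 * volume.real (hkLow x ε) := by
        rw [← mul_assoc]
        gcongr

/-- The agent `β` whose opinion is the minimum of `x(A)` plus one gets updated
opinion below `Ā + 2ε²`, hence below `ε` (so it leaves `ℬ` on the left). -/
theorem hk_beta_escapes_left
    -- the confidence/width parameter ε and the fixed constant d = 3/2
    (ε d : ℝ) (hε : 0 < ε) (hε' : ε ≤ 1/10) (hd : d = 3/2)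
    -- partition of [0,1] into consecutive closed intervals A, B, C, D, E
    (a₁ a₂ a₃ a₄ : ℝ)
    (h₀₁ : 0 ≤ a₁) (h₁₂ : a₁ ≤ a₂) (h₂₃ : a₂ ≤ a₃) (h₃₄ : a₃ ≤ a₄) (h₄₅ : a₄ ≤ 1)
    (A B C D E : Set ℝ)
    (hA : A = Icc 0 a₁) (hB : B = Icc a₁ a₂) (hC : C = Icc a₂ a₃)
    (hD : D = Icc a₃ a₄) (hE : E = Icc a₄ 1)
    -- |B| = |D| = ε²|C|, |C| = ε²|A| = ε²|E| (symmetric about 1/2)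
    (hlenB : a₂ - a₁ = ε^2 * (a₃ - a₂))
    (hlenD : a₄ - a₃ = ε^2 * (a₃ - a₂))
    (hlenC : a₃ - a₂ = ε^2 * a₁)
    (hlenE : 1 - a₄ = a₁)
    -- the opinion function x : regular, nonnegative, anti-symmetric about 1/2
    (x : ℝ → ℝ) (hreg : Regular x)
    (hnonneg : ∀ α ∈ Icc (0:ℝ) 1, 0 ≤ x α)
    (hsym : ∀ s ∈ Icc (0:ℝ) (1/2), x (1/2 + s) + x (1/2 - s) = 2 * x (1/2))
    (hmid : x (1/2) = d + 3*ε/2)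
    -- the sets A_x = x⁻¹([0,2ε]), B_x = x⁻¹([2ε, d+ε]) and the mean Ā on A_x
    (Ax Bx : Set ℝ) (Abar : ℝ)
    (hAx : Ax = {α ∈ Icc (0:ℝ) 1 | x α ∈ Icc 0 (2*ε)})
    (hBx : Bx = {α ∈ Icc (0:ℝ) 1 | x α ∈ Icc (2*ε) (d + ε)})
    (hAbar : Abar = (∫ α in Ax, x α) / (volume Ax).toReal)
    -- derivative bounds e, s > 0
    (e s : ℝ) (he : 0 < e) (hs : 0 < s)
    -- Assumptions (I)–(VI)
    (hI : A ⊆ Ax)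
    (hII : Bx ⊆ B)
    (hIII : x '' A ⊆ Icc 0 ε)
    (hIV : ∀ α ∈ A, DifferentiableAt ℝ x α → deriv x α ≤ e)
    (hV : ∀ α ∈ Bx, DifferentiableAt ℝ x α → s ≤ deriv x α)
    (hVI : ε - Abar > 2*ε^2)
    -- the updated opinion function y = Tx
    (y : ℝ → ℝ) (hy : y = hkT x)
    (β : ℝ) (hβ : β ∈ Icc (0:ℝ) 1) (hβx : x β = x 0 + 1) :
    y β < Abar + 2*ε^2 ∧ y β < ε := by
  subst hd hA hB hAx hBx hy
  have hεd : (3 / 2 + 2 * ε) * (1 + ε ^ 2) + (2 + ε) * ε ^ 2 < 2 := by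
    have hε_sq : ε ^ 2 ≤ 1 / 100 := by nlinarith
    nlinarith
  have hlt := hk_beta_escapes_left_general hε (by norm_num) hεd ⟨hlenB, hlenC, hlenD, hlenE⟩
    hreg.1 hreg.2.1 hsym hmid hII (mapsTo_iff_image_subset.2 hIII) hβ hβx.le
  have hmean : Abar = ⨍ α in hkLow x ε, x α := hAbar.trans (setAverage_eq_div volume x _).symm
  rw [← hmean] at hlt
  exact ⟨hlt, by linarith⟩
end

section
/- For the discrete HK model with N agents and opinions x : {1,…,N} → ℝ, the updated state x⁺ equals x if and only if x is an equilibrium state, i.e. if and only if |x(i) − x(j)| > 1 for all pairs i, j with x(i) ≠ x(j). -/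
/-!
A state is fixed by the update iff it equals its average over every closed neighbourhood of the
influence graph, i.e. iff it lies in the kernel of the graph Laplacian. As
`xᵀ L x = ∑ (x i - x j) ^ 2`, summed over the edges, the kernel consists of the states that agree
along every edge, and these are the equilibria: no two distinct opinions are within reach.
-/

open Finset

/-- The discrete Hegselmann–Krause update: each agent replaces its opinion by
the average of the opinions within distance 1 of its own. -/
noncomputable def hkD {N : ℕ} (x : Fin N → ℝ) : Fin N → ℝ :=
  fun i => (∑ j ∈ univ.filter (fun j => |x j - x i| ≤ 1), x j) /
    ((univ.filter (fun j => |x j - x i| ≤ 1)).card : ℝ)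

section GraphLaplacian

open Matrix

variable {V K : Type*} [Fintype V] [DecidableEq V] [Field K]
  (G : SimpleGraph V) [DecidableRel G.Adj] (v : V → K)

theorem sum_insert_neighborFinset_div_card_eq_iff [CharZero K] (i : V) :
    (∑ j ∈ insert i (G.neighborFinset i), v j) / #(insert i (G.neighborFinset i)) = v i ↔
      (G.lapMatrix K *ᵥ v) i = 0 := by
  have hi : i ∉ G.neighborFinset i := G.notMem_neighborFinset_self i
  have hdeg : (G.degree i + 1 : K) ≠ 0 := Nat.cast_add_one_ne_zero _
  rw [sum_insert hi, card_insert_of_notMem hi, G.card_neighborFinset_eq_degree, Nat.cast_succ,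
    div_eq_iff hdeg, G.lapMatrix_mulVec_apply]
  constructor <;> intro h <;> linear_combination -h

theorem lapMatrix_mulVec_eq_zero_iff_forall_adj [LinearOrder K] [IsStrictOrderedRing K] :
    G.lapMatrix K *ᵥ v = 0 ↔ ∀ i j, G.Adj i j → v i = v j := by
  constructor
  · intro hker
    rw [← SimpleGraph.lapMatrix_toLinearMap₂'_apply'_eq_zero_iff_forall_adj K,
      toLinearMap₂'_apply', hker, dotProduct_zero]
  · intro hadj
    ext i
    have hsum : ∑ j ∈ G.neighborFinset i, v j = ∑ _j ∈ G.neighborFinset i, v i :=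
      sum_congr rfl fun j hj ↦ (hadj i j ((G.mem_neighborFinset i j).1 hj)).symm
    rw [G.lapMatrix_mulVec_apply, hsum, sum_const, G.card_neighborFinset_eq_degree, nsmul_eq_mul,
      sub_self, Pi.zero_apply]

theorem forall_sum_insert_neighborFinset_div_card_eq_iff_forall_adj
    [LinearOrder K] [IsStrictOrderedRing K] :
    (∀ i, (∑ j ∈ insert i (G.neighborFinset i), v j) / #(insert i (G.neighborFinset i)) = v i) ↔
      ∀ i j, G.Adj i j → v i = v j := by
  simp only [sum_insert_neighborFinset_div_card_eq_iff,
    ← lapMatrix_mulVec_eq_zero_iff_forall_adj, funext_iff, Pi.zero_apply]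

end GraphLaplacian

section ConfidenceGraph

variable {V K : Type*} [AddCommGroup K] [LinearOrder K]

/-- The graph of mutual influence: distinct agents are adjacent when their opinions differ by at
most the confidence threshold `ε`. Self-influence is left out to get a simple graph. -/
def confidenceGraph (ε : K) (x : V → K) : SimpleGraph V where
  Adj i j := i ≠ j ∧ |x j - x i| ≤ ε
  symm := ⟨fun _ _ ⟨hne, hle⟩ ↦ ⟨hne.symm, abs_sub_comm (x _) _ ▸ hle⟩⟩
  loopless := ⟨fun _ h ↦ h.1 rfl⟩

instance [DecidableEq V] (ε : K) (x : V → K) : DecidableRel (confidenceGraph ε x).Adj :=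
  fun i j ↦ inferInstanceAs (Decidable (i ≠ j ∧ |x j - x i| ≤ ε))

theorem confidenceGraph_adj {ε : K} {x : V → K} {i j : V} :
    (confidenceGraph ε x).Adj i j ↔ i ≠ j ∧ |x j - x i| ≤ ε :=
  Iff.rfl

theorem forall_confidenceGraph_adj_eq_iff {ε : K} {x : V → K} :
    (∀ i j, (confidenceGraph ε x).Adj i j → x i = x j) ↔
      ∀ i j, x i ≠ x j → ε < |x i - x j| := by
  refine forall₂_congr fun i j ↦ ?_
  rw [confidenceGraph_adj, abs_sub_comm]
  constructor
  · intro hadj hne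
    by_contra! hle
    exact hne (hadj ⟨ne_of_apply_ne x hne, hle⟩)
  · intro hfar ⟨_, hle⟩
    by_contra hne
    exact (hfar hne).not_ge hle

theorem filter_abs_sub_le_eq_insert_neighborFinset [IsOrderedAddMonoid K] [Fintype V]
    [DecidableEq V] {ε : K} (hε : 0 ≤ ε) (x : V → K) (i : V) :
    ({j | |x j - x i| ≤ ε} : Finset V) = insert i ((confidenceGraph ε x).neighborFinset i) := by
  ext j
  rw [mem_filter_univ, mem_insert, SimpleGraph.mem_neighborFinset, confidenceGraph_adj]
  by_cases hij : j = i
  · simp [hij, hε]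
  · simp [hij, Ne.symm hij]

end ConfidenceGraph

section BoundedConfidence

variable {V K : Type*} [Fintype V] [Field K] [LinearOrder K]

/-- The Hegselmann–Krause update with confidence threshold `ε`, for agents indexed by any finite
type. For `ε < 0` no agent listens to itself and the update takes the junk value `0 / 0 = 0`. -/
def hkUpdate (ε : K) (x : V → K) (i : V) : K :=
  (∑ j with |x j - x i| ≤ ε, x j) / #{j | |x j - x i| ≤ ε}

theorem hkD_fixed_iff_equilibrium_general [IsStrictOrderedRing K]
    {ε : K} (hε : 0 ≤ ε) (x : V → K) :
    hkUpdate ε x = x ↔ ∀ i j, x i ≠ x j → ε < |x i - x j| := by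
  classical
  rw [← forall_confidenceGraph_adj_eq_iff,
    ← forall_sum_insert_neighborFinset_div_card_eq_iff_forall_adj, funext_iff]
  simp only [hkUpdate, filter_abs_sub_le_eq_insert_neighborFinset hε]

end BoundedConfidence

/-- The discrete HK update fixes a state iff it is an equilibrium state,
i.e. any two distinct opinion values differ by more than 1. -/
theorem hkD_fixed_iff_equilibrium {N : ℕ} (x : Fin N → ℝ) :
    hkD x = x ↔ ∀ i j : Fin N, x i ≠ x j → 1 < |x i - x j| :=
  hkD_fixed_iff_equilibrium_general zero_le_one x
end

section
/- Consider the discrete HK model with N = 100 agents and initial state x₀(i) = −1 for 1 ≤ i ≤ 98, x₀(99) = 0, x₀(100) = 1. Then after one update, x₁(i) = −98/99 for 1 ≤ i ≤ 98, x₁(99) = −97/100, and x₁(100) = 1/2; moreover, for every t ≥ 1 one has x_t(100) = 1/2 and |x_t(100) − x_t(i)| > 1 for all i ≤ 99, so agent 100 forms a cluster by himself in the equilibrium configuration. -/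
/-!
Averaging keeps an opinion inside every convex set containing its neighbours' opinions. Hence an
agent more than `1` away from all others is never reached: it does not move, and the agents on
either side of it stay on their half-line. It therefore suffices to compute one update, where the
large block at `-1` pulls the middle agent down to `(3 - N) / N`, which for `N > 6` is more than `1`
below the opinion `1 / 2` of the last agent.
-/

open Finset

section Neighbors

variable {N : ℕ} {x : Fin N → ℝ} {i j : Fin N}

/-- The neighbourhood `𝒩(i)` in the opinion profile `x`, over which `hkD` averages. -/
noncomputable def hkNeighbors (x : Fin N → ℝ) (i : Fin N) : Finset (Fin N) :=
  univ.filter fun j => |x j - x i| ≤ 1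

theorem mem_hkNeighbors : j ∈ hkNeighbors x i ↔ |x j - x i| ≤ 1 := by
  simp only [hkNeighbors, mem_filter, mem_univ, true_and]

theorem self_mem_hkNeighbors (x : Fin N → ℝ) (i : Fin N) : i ∈ hkNeighbors x i := by
  simp [mem_hkNeighbors]

theorem hkD_eq_sum_div_card (x : Fin N → ℝ) (i : Fin N) :
    hkD x i = (∑ j ∈ hkNeighbors x i, x j) / (#(hkNeighbors x i) : ℝ) :=
  rfl

theorem hkD_mem_of_convex {s : Set ℝ} (hs : Convex ℝ s) (hx : ∀ j ∈ hkNeighbors x i, x j ∈ s) :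
    hkD x i ∈ s := by
  have hne : (hkNeighbors x i).Nonempty := ⟨i, self_mem_hkNeighbors x i⟩
  have hmem := hs.centerMass_mem (w := fun _ => 1) (fun _ _ => zero_le_one) (by simpa) hx
  simpa [centerMass, hkD_eq_sum_div_card, div_eq_inv_mul] using hmem

end Neighbors

section Isolated

variable {N : ℕ} {x : Fin N → ℝ} {i : Fin N}

/-- Agent `i` forms a cluster by itself in the profile `x`: its neighbourhood is `{i}`. -/
def HKIsolated (x : Fin N → ℝ) (i : Fin N) : Prop :=
  ∀ j ≠ i, 1 < |x i - x j|

theorem HKIsolated.hkNeighbors_eq (h : HKIsolated x i) : hkNeighbors x i = {i} := by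
  refine eq_singleton_iff_unique_mem.mpr ⟨self_mem_hkNeighbors x i, fun j hj => ?_⟩
  by_contra hne
  rw [mem_hkNeighbors, abs_sub_comm] at hj
  exact (h j hne).not_ge hj

theorem HKIsolated.hkD_apply_self (h : HKIsolated x i) : hkD x i = x i := by
  simp [hkD_eq_sum_div_card, h.hkNeighbors_eq]

theorem HKIsolated.map_hkD (h : HKIsolated x i) : HKIsolated (hkD x) i := by
  intro j hj
  rw [h.hkD_apply_self]
  rcases lt_abs.mp (h j hj) with hbelow | habove
  · have hmem : hkD x j ∈ Set.Iio (x i - 1) := by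
      refine hkD_mem_of_convex (convex_Iio _) fun k hk => ?_
      have hki : x k < x i := by linarith [(abs_le.mp (mem_hkNeighbors.mp hk)).2]
      have hgap := h k (ne_of_apply_ne x hki.ne)
      rw [abs_of_pos (sub_pos.mpr hki)] at hgap
      exact lt_sub_comm.mp hgap
    exact lt_abs.mpr (.inl (lt_sub_comm.mp hmem))
  · have hmem : hkD x j ∈ Set.Ioi (x i + 1) := by
      refine hkD_mem_of_convex (convex_Ioi _) fun k hk => ?_
      have hki : x i < x k := by linarith [(abs_le.mp (mem_hkNeighbors.mp hk)).1]
      have hgap := h k (ne_of_apply_ne x hki.ne')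
      rw [abs_of_neg (sub_neg.mpr hki), neg_sub] at hgap
      exact lt_sub_iff_add_lt'.mp hgap
    refine lt_abs.mpr (.inr ?_)
    rw [neg_sub]
    exact lt_sub_iff_add_lt'.mpr hmem

theorem HKIsolated.iterate_hkD (h : HKIsolated x i) (t : ℕ) :
    hkD^[t] x i = x i ∧ HKIsolated (hkD^[t] x) i := by
  induction t with
  | zero => exact ⟨rfl, h⟩
  | succ t ih =>
    rw [Function.iterate_succ_apply']
    exact ⟨ih.2.hkD_apply_self.trans ih.1, ih.2.map_hkD⟩

end Isolated

section Uneven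

variable {N : ℕ} {x : Fin N → ℝ} {p q : Fin N}

/-- The uneven profile: agent `p` has opinion `0`, agent `q` has opinion `1`, and all the other
agents have opinion `-1`. -/
structure IsUnevenProfile (x : Fin N → ℝ) (p q : Fin N) : Prop where
  middle : x p = 0
  right : x q = 1
  block : ∀ i, i ≠ p → i ≠ q → x i = -1

namespace IsUnevenProfile

variable (h : IsUnevenProfile x p q)
include h

theorem middle_ne_right : p ≠ q :=
  ne_of_apply_ne x (by simp [h.middle, h.right])

theorem hkNeighbors_block {i : Fin N} (hip : i ≠ p) (hiq : i ≠ q) :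
    hkNeighbors x i = univ.erase q := by
  ext j
  rw [mem_hkNeighbors, h.block i hip hiq]
  rcases eq_or_ne j q with rfl | hjq
  · norm_num [h.right]
  rcases eq_or_ne j p with rfl | hjp
  · norm_num [h.middle, hjq]
  · norm_num [h.block j hjp hjq, hjq]

theorem hkNeighbors_middle : hkNeighbors x p = univ := by
  ext j
  rw [mem_hkNeighbors, h.middle]
  rcases eq_or_ne j q with rfl | hjq
  · norm_num [h.right]
  rcases eq_or_ne j p with rfl | hjp
  · norm_num [h.middle]
  · norm_num [h.block j hjp hjq]

theorem hkNeighbors_right : hkNeighbors x q = {p, q} := by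
  ext j
  rw [mem_hkNeighbors, h.right]
  rcases eq_or_ne j q with rfl | hjq
  · norm_num [h.right]
  rcases eq_or_ne j p with rfl | hjp
  · norm_num [h.middle]
  · norm_num [h.block j hjp hjq, hjp, hjq]

theorem sum_eq : ∑ j, x j = 3 - N := by
  -- Adding `1` to every opinion makes the block vanish.
  have hshift : ∑ j, (x j + 1) = ∑ j ∈ {p, q}, (x j + 1) := by
    refine (sum_subset (subset_univ _) fun j _ hj => ?_).symm
    simp only [mem_insert, mem_singleton, not_or] at hj
    rw [h.block j hj.1 hj.2, neg_add_cancel]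
  rw [sum_pair h.middle_ne_right, h.middle, h.right, sum_add_distrib, sum_const,
    card_fin, nsmul_one] at hshift
  linarith

theorem hkD_block {i : Fin N} (hip : i ≠ p) (hiq : i ≠ q) :
    hkD x i = -(N - 2) / (N - 1) := by
  have hsum := add_sum_erase univ x (mem_univ q)
  rw [h.right, h.sum_eq] at hsum
  rw [hkD_eq_sum_div_card, h.hkNeighbors_block hip hiq,
    cast_card_erase_of_mem (mem_univ q), card_fin]
  congr 1
  linarith

theorem hkD_middle : hkD x p = (3 - N) / N := by
  rw [hkD_eq_sum_div_card, h.hkNeighbors_middle, h.sum_eq, card_fin]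

theorem hkD_right : hkD x q = 1 / 2 := by
  rw [hkD_eq_sum_div_card, h.hkNeighbors_right, sum_pair h.middle_ne_right,
    card_pair h.middle_ne_right, h.middle, h.right]
  norm_num

theorem hkIsolated_hkD (hN : 6 < N) : HKIsolated (hkD x) q := by
  have hN' : (6 : ℝ) < N := by exact_mod_cast hN
  intro i hiq
  suffices hkD x i < -1 / 2 by
    rw [h.hkD_right]
    exact lt_abs.mpr (.inl (by linarith))
  by_cases hip : i = p
  · rw [hip, h.hkD_middle, div_lt_iff₀ (by linarith)]
    linarith
  · rw [h.hkD_block hip hiq, div_lt_iff₀ (by linarith)]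
    linarith

end IsUnevenProfile

end Uneven

theorem hkD_uneven_example_general {N : ℕ} (hN : 6 < N) {x : Fin N → ℝ} {p q : Fin N}
    (h : IsUnevenProfile x p q) :
    (∀ i, i ≠ p → i ≠ q → hkD x i = -(N - 2) / (N - 1)) ∧
    hkD x p = (3 - N) / N ∧
    hkD x q = 1 / 2 ∧
    ∀ t, 1 ≤ t → hkD^[t] x q = 1 / 2 ∧ HKIsolated (hkD^[t] x) q := by
  refine ⟨fun _ => h.hkD_block, h.hkD_middle, h.hkD_right, fun t ht => ?_⟩
  obtain ⟨t, rfl⟩ := Nat.exists_eq_add_of_le' ht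
  rw [Function.iterate_succ_apply, ← h.hkD_right]
  exact (h.hkIsolated_hkD hN).iterate_hkD t

/-- The 100-agent example (3) of the paper: 98 agents at −1, one at 0, one at 1.
After one step the opinions are −98/99 (98 agents), −97/100 and 1/2, and agent
100 stays isolated at 1/2 forever, forming a cluster by himself. -/
theorem hkD_uneven_example (x₀ : Fin 100 → ℝ)
    (h : ∀ i : Fin 100,
      x₀ i = if (i : ℕ) ≤ 97 then -1 else if (i : ℕ) = 98 then 0 else 1) :
    (∀ i : Fin 100, (i : ℕ) ≤ 97 → hkD^[1] x₀ i = -98/99) ∧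
    hkD^[1] x₀ ⟨98, by norm_num⟩ = -97/100 ∧
    hkD^[1] x₀ ⟨99, by norm_num⟩ = 1/2 ∧
    (∀ t : ℕ, 1 ≤ t →
      hkD^[t] x₀ ⟨99, by norm_num⟩ = 1/2 ∧
      ∀ i : Fin 100, (i : ℕ) ≤ 98 →
        1 < |hkD^[t] x₀ ⟨99, by norm_num⟩ - hkD^[t] x₀ i|) := by
  have hx : IsUnevenProfile x₀ ⟨98, by norm_num⟩ ⟨99, by norm_num⟩ :=
    ⟨by simp [h], by simp [h], fun i hp hq => by rw [h, if_pos (by grind)]⟩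
  obtain ⟨hblock, hmiddle, hright, hiter⟩ := hkD_uneven_example_general (by norm_num) hx
  refine ⟨fun i hi => (hblock i (by grind) (by grind)).trans (by norm_num),
    hmiddle.trans (by norm_num), hright, fun t ht => ?_⟩
  exact ⟨(hiter t ht).1, fun i hi => (hiter t ht).2 i (by grind)⟩
end

section
/- Let ε = 1/100 and d = 3/2, and let (e_t)_{t≥0} and (s_t)_{t≥0} be sequences of positive reals with e₀ = ε, s₀ = d/ε⁴, and satisfying e_{t+1} ≤ 2 e_t / s_t and s_{t+1} ≥ (ε/2)·(s_t / e_t) for all t ≥ 0. Then for all t ≥ 1, e_t ≤ 2ε⁵/d and s_t ≥ (d/(4ε⁴))^{t−1} · d/(2ε⁴). -/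
/-!
Write `e'`, `s'` for the successors of `e`, `s`. The region `e ≤ E`, `S ≤ s` is trapping for the
recursion `e' ≤ a * e / s`, `b * (s / e) ≤ s'` as soon as `a ≤ S` and `E ≤ b`: there `a / s ≤ 1`, so
`e` does not increase, and `b / e ≥ b / E ≥ 1`, so `s` grows at least by the factor `b / E`.
The recursion at hand has `a = 2` and `b = ε / 2`, and its first step lands in the region with
`E = 2 * ε ^ 5 / d` and `S = d / (2 * ε ^ 4)`, for which both conditions say `4 * ε ^ 4 ≤ d`, and
`b / E = d / (4 * ε ^ 4)`.
-/

section CrossQuotientRecursion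

variable {a b E S : ℝ} {e s : ℕ → ℝ}

lemma le_and_le_of_cross_quotient_rec (hS : 0 < S) (haS : a ≤ S) (hEb : E ≤ b)
    (he : ∀ n, 0 < e n) (he0 : e 0 ≤ E) (hs0 : S ≤ s 0)
    (hrec_e : ∀ n, e (n + 1) ≤ a * e n / s n) (hrec_s : ∀ n, b * (s n / e n) ≤ s (n + 1)) (n : ℕ) :
    e n ≤ E ∧ S ≤ s n := by
  induction n with
  | zero => exact ⟨he0, hs0⟩
  | succ n ih =>
    obtain ⟨heE, hSs⟩ := ih
    have hs : 0 < s n := hS.trans_le hSs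
    have e_le : e (n + 1) ≤ e n := calc
      e (n + 1) ≤ a * e n / s n := hrec_e n
      _ ≤ s n * e n / s n := by gcongr; exacts [(he n).le, haS.trans hSs]
      _ = e n := mul_div_cancel_left₀ _ hs.ne'
    have le_s : s n ≤ s (n + 1) := calc
      s n = e n * (s n / e n) := (mul_div_cancel₀ _ (he n).ne').symm
      _ ≤ b * (s n / e n) := by gcongr; exacts [(div_pos hs (he n)).le, heE.trans hEb]
      _ ≤ s (n + 1) := hrec_s n
    exact ⟨e_le.trans heE, hSs.trans le_s⟩

lemma pow_mul_le_of_mul_div_le (hb : 0 ≤ b) (he : ∀ n, 0 < e n) (heE : ∀ n, e n ≤ E)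
    (hs : ∀ n, 0 ≤ s n) (hrec_s : ∀ n, b * (s n / e n) ≤ s (n + 1)) (n : ℕ) :
    (b / E) ^ n * s 0 ≤ s n := by
  have hE : 0 < E := (he 0).trans_le (heE 0)
  refine geom_le (div_nonneg hb hE.le) n fun k _ ↦ ?_
  calc b / E * s k = b * (s k / E) := by ring
    _ ≤ b * (s k / e k) := by gcongr; exacts [hs k, he k, heE k]
    _ ≤ s (k + 1) := hrec_s k

lemma le_and_pow_mul_le_of_cross_quotient_rec (hS : 0 < S) (haS : a ≤ S) (hEb : E ≤ b)
    (he : ∀ n, 0 < e n) (he0 : e 0 ≤ E) (hs0 : S ≤ s 0)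
    (hrec_e : ∀ n, e (n + 1) ≤ a * e n / s n) (hrec_s : ∀ n, b * (s n / e n) ≤ s (n + 1)) (n : ℕ) :
    e n ≤ E ∧ (b / E) ^ n * S ≤ s n := by
  have trapped := le_and_le_of_cross_quotient_rec hS haS hEb he he0 hs0 hrec_e hrec_s
  have hE : 0 < E := (he 0).trans_le he0
  have hb : 0 ≤ b := hE.le.trans hEb
  refine ⟨(trapped n).1, ?_⟩
  calc (b / E) ^ n * S ≤ (b / E) ^ n * s 0 := by gcongr
    _ ≤ s n := pow_mul_le_of_mul_div_le hb he (fun k ↦ (trapped k).1)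
        (fun k ↦ hS.le.trans (trapped k).2) hrec_s n

end CrossQuotientRecursion

theorem hk_derivative_bounds_iterate_general {ε d : ℝ} (hε : 0 < ε) (hd : 4 * ε ^ 4 ≤ d)
    {e s : ℕ → ℝ} (he : ∀ t, 0 < e t) (he0 : e 0 ≤ ε) (hs0 : d / ε ^ 4 ≤ s 0)
    (hrec_e : ∀ t, e (t + 1) ≤ 2 * e t / s t)
    (hrec_s : ∀ t, ε / 2 * (s t / e t) ≤ s (t + 1)) (t : ℕ) (ht : 1 ≤ t) :
    e t ≤ 2 * ε ^ 5 / d ∧ (d / (4 * ε ^ 4)) ^ (t - 1) * (d / (2 * ε ^ 4)) ≤ s t := by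
  have hd_pos : 0 < d := lt_of_lt_of_le (by positivity) hd
  have hs0_pos : 0 < s 0 := lt_of_lt_of_le (by positivity) hs0
  have he1 : e 1 ≤ 2 * ε ^ 5 / d := calc
    e 1 ≤ 2 * e 0 / s 0 := hrec_e 0
    _ ≤ 2 * ε / (d / ε ^ 4) := by gcongr
    _ = 2 * ε ^ 5 / d := by field_simp
  have hs1 : d / (2 * ε ^ 4) ≤ s 1 := calc
    d / (2 * ε ^ 4) = ε / 2 * (d / ε ^ 4 / ε) := by field_simp
    _ ≤ ε / 2 * (s 0 / e 0) := by gcongr; exact he 0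
    _ ≤ s 1 := hrec_s 0
  have hS : 2 ≤ d / (2 * ε ^ 4) := by rw [le_div_iff₀ (by positivity)]; linarith
  have hE : 2 * ε ^ 5 / d ≤ ε / 2 := calc
    2 * ε ^ 5 / d ≤ 2 * ε ^ 5 / (4 * ε ^ 4) := by gcongr
    _ = ε / 2 := by field_simp; norm_num
  have hratio : ε / 2 / (2 * ε ^ 5 / d) = d / (4 * ε ^ 4) := by field_simp; norm_num
  obtain ⟨n, rfl⟩ := Nat.exists_eq_add_of_le' ht
  rw [Nat.add_sub_cancel, ← hratio]
  exact le_and_pow_mul_le_of_cross_quotient_rec (e := fun n ↦ e (n + 1)) (s := fun n ↦ s (n + 1))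
    (by positivity) hS hE (fun n ↦ he (n + 1)) he1 hs1 (fun n ↦ hrec_e (n + 1))
    (fun n ↦ hrec_s (n + 1)) n

/-- The recursive derivative bounds from the proof of the main theorem: with
`ε = 1/100`, `d = 3/2`, `e₀ = ε`, `s₀ = d/ε⁴`, and the recursions
`e_{t+1} ≤ 2e_t/s_t`, `s_{t+1} ≥ (ε/2)(s_t/e_t)`, one gets `e_t ≤ 2ε⁵/d` and
`s_t ≥ (d/(4ε⁴))^{t−1}·(d/(2ε⁴))` for all `t ≥ 1`. -/
theorem hk_derivative_bounds_iterate (ε d : ℝ) (hε : ε = 1/100) (hd : d = 3/2)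
    (e s : ℕ → ℝ) (he : ∀ t, 0 < e t) (hs : ∀ t, 0 < s t)
    (he0 : e 0 = ε) (hs0 : s 0 = d / ε^4)
    (hrec_e : ∀ t, e (t+1) ≤ 2 * e t / s t)
    (hrec_s : ∀ t, s (t+1) ≥ (ε/2) * (s t / e t)) :
    ∀ t : ℕ, 1 ≤ t →
      e t ≤ 2 * ε^5 / d ∧ (d / (4 * ε^4))^(t-1) * (d / (2 * ε^4)) ≤ s t := by
  subst hε hd
  exact hk_derivative_bounds_iterate_general (by norm_num) (by norm_num) he he0.le hs0.ge
    hrec_e hrec_s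
end
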